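/- arXiv:1607.02381 — 3 statements merged into one kernel-verified Lean document; each statement's English description precedes it below -/
import Mathlib

section
/- For every positive integer n and every Boolean function b : {0,1}^n → {0,1}, the noiseless sequential mean squared error satisfies M(X^n | b(X^n)) ≥ (n − 2 ln 2)/4. -/
open Finset MeasureTheory

noncomputable section

/-- Conditional probability that coordinate `k` equals `true` given the coordinates
before `k`, under the (possibly unnormalized) pmf `μ` on `{0,1}^n`. -/
def condQ {n : ℕ} (μ : (Fin n → Bool) → ℝ) (k : Fin n) (x : Fin n → Bool) : ℝ :=
  (∑ y ∈ Finset.univ.filter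
      (fun y : Fin n → Bool => (∀ i : Fin n, i < k → y i = x i) ∧ y k = true), μ y) /
  (∑ y ∈ Finset.univ.filter
      (fun y : Fin n → Bool => ∀ i : Fin n, i < k → y i = x i), μ y)

/-- The `k`-th term `E[Q_k (1 - Q_k)]` of the sequential mean squared error. -/
def smseTerm {n : ℕ} (μ : (Fin n → Bool) → ℝ) (k : Fin n) : ℝ :=
  ∑ x : Fin n → Bool, μ x * (condQ μ k x * (1 - condQ μ k x))

/-- The sequential mean squared error `M(U^n) = Σ_k E[Q_k (1 - Q_k)]`. -/
def smse {n : ℕ} (μ : (Fin n → Bool) → ℝ) : ℝ := ∑ k : Fin n, smseTerm μ k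

/-- The uniform pmf on `{0,1}^n`. -/
def unif (n : ℕ) : (Fin n → Bool) → ℝ := fun _ => ((2 : ℝ) ^ n)⁻¹

/-- The SMSE of `μ` given the side information `b` :
`M(X^n | b(X^n)) = Σ_c Σ_k E[Q_k (1-Q_k)]` where `Q_k = P[X_k = 1 | X^{k-1}, b(X^n)]`. -/
def condSMSE {n : ℕ} (μ : (Fin n → Bool) → ℝ) (b : (Fin n → Bool) → Bool) : ℝ :=
  ∑ c : Bool, smse (fun x => if b x = c then μ x else 0)

/-- Hamming weight. -/
def hw {n : ℕ} (x : Fin n → Bool) : ℕ := (Finset.univ.filter (fun i => x i = true)).card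

/-- The majority function: `1` iff the Hamming weight exceeds `n/2`. -/
def majF (n : ℕ) : (Fin n → Bool) → Bool := fun x => decide (n < 2 * hw x)

/-- The joint pmf `y ↦ P[Y^n = y, b(X^n) = c]` where `X^n` is uniform and
`Y^n = X^n ⊕ Z^n` with `Z^n` i.i.d. Bernoulli(α). -/
def noisyPMF (n : ℕ) (α : ℝ) (b : (Fin n → Bool) → Bool) (c : Bool) :
    (Fin n → Bool) → ℝ :=
  fun y => ∑ x : Fin n → Bool,
    if b x = c then ((2 : ℝ) ^ n)⁻¹ * ∏ i : Fin n, (if y i = x i then 1 - α else α) else 0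

/-- The noisy SMSE `M(Y^n | b(X^n))`. -/
def noisySMSE (n : ℕ) (α : ℝ) (b : (Fin n → Bool) → Bool) : ℝ :=
  ∑ c : Bool, smse (noisyPMF n α b c)

/-- The binary entropy function (base 2). -/
def binEnt (p : ℝ) : ℝ := -(p * Real.logb 2 p) - (1 - p) * Real.logb 2 (1 - p)

/-- `μ(α) = h(arccos(1-2α)/π)`. -/
def muF (α : ℝ) : ℝ := binEnt (Real.arccos (1 - 2 * α) / Real.pi)

/-- Base-2 Shannon entropy of a pmf on a finite type. -/
def entropy {β : Type*} [Fintype β] (p : β → ℝ) : ℝ := ∑ x : β, -(p x * Real.logb 2 (p x))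

open scoped Classical in
/-- Pushforward pmf along `f`. -/
def push {β γ : Type*} [Fintype β] (μ : β → ℝ) (f : β → γ) : γ → ℝ :=
  fun c => ∑ x ∈ Finset.univ.filter (fun x => f x = c), μ x

/-- The pmf of a majority random vector: uniform on `{v : w(v) > n/2}`. -/
def majPMF (n : ℕ) : (Fin n → Bool) → ℝ :=
  fun v => if n < 2 * hw v then
    (((Finset.univ.filter (fun u : Fin n → Bool => n < 2 * hw u)).card : ℝ))⁻¹ else 0

/-- Standard Gaussian density. -/
def stdPdf (t : ℝ) : ℝ := Real.exp (-(t ^ 2) / 2) / Real.sqrt (2 * Real.pi)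

/-- Gaussian tail function `Q(u) = P[G > u]`. -/
def gaussQ (u : ℝ) : ℝ := ∫ s in Set.Ioi u, stdPdf s

/-- Base-2 conditional Shannon entropy `H(C | Y)` for the joint pmf `J`. -/
def condEntBool {β : Type*} [Fintype β] (J : β → Bool → ℝ) : ℝ :=
  ∑ y : β, ∑ c : Bool, -(J y c * Real.logb 2 (J y c / (∑ c' : Bool, J y c')))

end

/-!
The identity `q (1 - q) = (1 - (2q - 1)²) / 4` turns the claim into
`Σ_k E[(2 Q_k - 1)²] ≤ 2 ln 2`. Pinsker's inequality against a fair coin, in the form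
`(2q - 1)² ≤ 2 (ln 2 - h(q))` with `h` the binary entropy in nats (`binEntropy_le`), bounds the
left side by twice a sum of conditional divergences from the fair coin; by the chain rule that
sum is the divergence of `X^n` given `b(X^n)` from the uniform law, which is
`H(b(X^n)) ≤ ln 2`.

The chain rule is carried out by induction on `n`, for arbitrary nonnegative weights `μ`
(`smse_lower_bound`): conditioning on the first coordinate splits `smse μ` into the first term
and the values of `smse` on the two halves of the cube (`smse_succ`), and restricting weights to
a half needs no renormalization.
-/

/-- The restriction of the weights `μ` to the half cube whose first coordinate is `a`. -/
def halfCube {n : ℕ} (μ : (Fin (n + 1) → Bool) → ℝ) (a : Bool) : (Fin n → Bool) → ℝ :=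
  fun y => μ (Fin.cons a y)

lemma sum_cube_succ {n : ℕ} (f : (Fin (n + 1) → Bool) → ℝ) :
    ∑ x, f x = ∑ y, f (Fin.cons true y) + ∑ y, f (Fin.cons false y) := by
  rw [← (Fin.consEquiv (fun _ => Bool)).sum_comp, Fintype.sum_prod_type, Fintype.sum_bool]
  rfl

/-- Pinsker's inequality against a fair coin, with `q` its success probability. -/
lemma binEntropy_le {q : ℝ} (h0 : 0 ≤ q) (h1 : q ≤ 1) :
    Real.binEntropy q ≤ Real.log 2 - (2 * q - 1) ^ 2 / 2 := by
  -- The gap between the two sides, written here without its constant `log 2`, is convex and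
  -- symmetric about `1/2`, where it vanishes.
  have hconv : ConvexOn ℝ (Set.Icc 0 1)
      (fun x : ℝ => -(2 * x - 1) ^ 2 / 2 - Real.binEntropy x) := by
    refine convexOn_of_hasDerivWithinAt2_nonneg (convex_Icc 0 1)
      (f' := fun x => -(2 * (2 * x - 1)) - (Real.log (1 - x) - Real.log x))
      (f'' := fun x => -4 + ((1 - x)⁻¹ + x⁻¹)) (by fun_prop) ?_ ?_ ?_
    · intro x hx
      rw [interior_Icc] at hx
      have h := Real.hasDerivAt_binEntropy hx.1.ne' hx.2.ne
      have h2 : HasDerivAt (fun x : ℝ => -(2 * x - 1) ^ 2 / 2) (-(2 * (2 * x - 1))) x := by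
        have h3 : HasDerivAt (fun x : ℝ => 2 * x - 1) (2 * 1) x :=
          ((hasDerivAt_id x).const_mul 2).sub_const 1
        refine HasDerivAt.congr_deriv (((h3.pow 2).neg).div_const 2) ?_
        norm_num
        ring
      exact (h2.sub h).hasDerivWithinAt
    · intro x hx
      rw [interior_Icc] at hx
      have h1 := (Real.hasDerivAt_log (x := 1 - x) (by linarith [hx.2])).comp x
        ((hasDerivAt_id x).const_sub 1)
      have h2 := Real.hasDerivAt_log hx.1.ne'
      have h3 : HasDerivAt (fun x : ℝ => -(2 * (2 * x - 1))) (-4) x := by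
        have h4 : HasDerivAt (fun x : ℝ => 2 * x - 1) (2 * 1) x :=
          ((hasDerivAt_id x).const_mul 2).sub_const 1
        refine HasDerivAt.congr_deriv (h4.const_mul 2).neg ?_
        norm_num
      refine (HasDerivAt.congr_deriv (h3.sub (h1.sub h2)) ?_).hasDerivWithinAt
      ring
    · intro x hx
      rw [interior_Icc] at hx
      have ha : 0 < x := hx.1
      have hb : 0 < 1 - x := by linarith [hx.2]
      have : -4 + ((1 - x)⁻¹ + x⁻¹) = (2 * x - 1) ^ 2 / (x * (1 - x)) := by
        field_simp; ring
      rw [this]; positivity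
  have := (convexOn_iff_forall_pos.mp hconv).2 (show q ∈ Set.Icc (0 : ℝ) 1 from ⟨h0, h1⟩)
    (show 1 - q ∈ Set.Icc (0 : ℝ) 1 from ⟨by linarith, by linarith⟩)
    (show (0 : ℝ) < 1 / 2 by norm_num) (show (0 : ℝ) < 1 / 2 by norm_num) (by norm_num)
  simp only [smul_eq_mul, Real.binEntropy_one_sub] at this
  rw [show 1 / 2 * q + 1 / 2 * (1 - q) = (2 : ℝ)⁻¹ by ring, Real.binEntropy_two_inv] at this
  nlinarith

/-- `binEntropy_le` for unnormalized weights `a`, `b` of the two outcomes. At `a = b = 0` the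
quotients are `0`, so the inequality persists. -/
lemma pinsker_weights {a b : ℝ} (ha : 0 ≤ a) (hb : 0 ≤ b) :
    ((a + b) - 2 * (Real.negMulLog (a + b) - Real.negMulLog a - Real.negMulLog b
      + (a + b) * Real.log 2)) / 4 ≤ (a + b) * (a / (a + b) * (1 - a / (a + b))) := by
  rcases (add_nonneg ha hb).eq_or_lt with h | h
  · obtain rfl : a = 0 := by linarith
    obtain rfl : b = 0 := by linarith
    simp
  · obtain ⟨m, hm⟩ : ∃ m, m = a + b := ⟨_, rfl⟩
    obtain ⟨q, hq⟩ : ∃ q, q = a / m := ⟨_, rfl⟩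
    rw [← hm] at h ⊢
    rw [← hq]
    have haq : a = m * q := by rw [hq]; field_simp
    have hbq : b = m * (1 - q) := by linarith
    have hp := binEntropy_le (q := q) (hq ▸ div_nonneg ha h.le)
      (by rw [hq, div_le_one h]; linarith)
    rw [Real.binEntropy_eq_negMulLog_add_negMulLog_one_sub] at hp
    rw [haq, hbq, Real.negMulLog_mul, Real.negMulLog_mul]
    have := mul_le_mul_of_nonneg_left hp h.le
    nlinarith

lemma condQ_zero {n : ℕ} (μ : (Fin (n + 1) → Bool) → ℝ) (x : Fin (n + 1) → Bool) :
    condQ μ 0 x = (∑ y, halfCube μ true y) /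
      (∑ y, halfCube μ true y + ∑ y, halfCube μ false y) := by
  unfold condQ halfCube
  simp [Finset.sum_filter, sum_cube_succ]

lemma condQ_succ {n : ℕ} (μ : (Fin (n + 1) → Bool) → ℝ) (k : Fin n) (a : Bool)
    (x : Fin n → Bool) :
    condQ μ k.succ (Fin.cons a x) = condQ (halfCube μ a) k x := by
  unfold condQ halfCube
  cases a <;> simp [Finset.sum_filter, sum_cube_succ, Fin.forall_fin_succ]

lemma smse_succ {n : ℕ} (μ : (Fin (n + 1) → Bool) → ℝ) :
    smse μ = (∑ y, halfCube μ true y + ∑ y, halfCube μ false y) *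
        ((∑ y, halfCube μ true y) / (∑ y, halfCube μ true y + ∑ y, halfCube μ false y) *
          (1 - (∑ y, halfCube μ true y) /
            (∑ y, halfCube μ true y + ∑ y, halfCube μ false y)))
      + smse (halfCube μ true) + smse (halfCube μ false) := by
  have h0 : smseTerm μ 0 = (∑ y, halfCube μ true y + ∑ y, halfCube μ false y) *
        ((∑ y, halfCube μ true y) / (∑ y, halfCube μ true y + ∑ y, halfCube μ false y) *
          (1 - (∑ y, halfCube μ true y) /
            (∑ y, halfCube μ true y + ∑ y, halfCube μ false y))) := by
    unfold smseTerm
    simp only [condQ_zero]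
    rw [← Finset.sum_mul, sum_cube_succ]
    rfl
  have hs : ∀ k : Fin n, smseTerm μ k.succ
      = smseTerm (halfCube μ true) k + smseTerm (halfCube μ false) k := by
    intro k
    unfold smseTerm
    rw [sum_cube_succ]
    simp only [condQ_succ]
    rfl
  rw [smse, Fin.sum_univ_succ, h0]
  simp only [hs, Finset.sum_add_distrib, smse]
  ring

/-- For weights of total mass `m`, the bracket multiplying `2` is `m` times the divergence from
the uniform law of the normalized weights. -/
lemma smse_lower_bound (n : ℕ) (μ : (Fin n → Bool) → ℝ) (hμ : ∀ x, 0 ≤ μ x) :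
    (n * ∑ x, μ x - 2 * (Real.negMulLog (∑ x, μ x) - ∑ x, Real.negMulLog (μ x)
      + n * (∑ x, μ x) * Real.log 2)) / 4 ≤ smse μ := by
  induction n with
  | zero => simp [smse]
  | succ n ih =>
    have h1 := ih (halfCube μ true) (fun _ => hμ _)
    have h2 := ih (halfCube μ false) (fun _ => hμ _)
    have hp := pinsker_weights (a := ∑ y, halfCube μ true y) (b := ∑ y, halfCube μ false y)
      (Finset.sum_nonneg fun _ _ => hμ _) (Finset.sum_nonneg fun _ _ => hμ _)
    have e1 : ∑ x, μ x = ∑ y, halfCube μ true y + ∑ y, halfCube μ false y := sum_cube_succ μ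
    have e2 : ∑ x, Real.negMulLog (μ x) = ∑ y, Real.negMulLog (halfCube μ true y)
        + ∑ y, Real.negMulLog (halfCube μ false y) := sum_cube_succ _
    rw [smse_succ, e1, e2]
    push_cast
    linarith

theorem stmt0 (n : ℕ) (hn : 0 < n) (b : (Fin n → Bool) → Bool) :
    condSMSE (unif n) b ≥ ((n : ℝ) - 2 * Real.log 2) / 4 := by
  -- The weights are constant on their support, so only the term `negMulLog P[b = c]` survives.
  have key : ∀ c : Bool,
      (n * (∑ x, if b x = c then unif n x else 0)
        - 2 * Real.negMulLog (∑ x, if b x = c then unif n x else 0)) / 4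
      ≤ smse (fun x => if b x = c then unif n x else 0) := by
    intro c
    have h := smse_lower_bound n (fun x => if b x = c then unif n x else 0)
      (fun x => by dsimp only [unif]; split_ifs <;> positivity)
    have e : ∑ x, Real.negMulLog (if b x = c then unif n x else 0)
        = n * (∑ x, if b x = c then unif n x else 0) * Real.log 2 := by
      rw [Finset.mul_sum, Finset.sum_mul]
      refine Finset.sum_congr rfl fun x _ => ?_
      split_ifs
      · simp only [Real.negMulLog, unif, Real.log_inv, Real.log_pow]
        ring
      · simp
    rw [e] at h
    linarith
  have hsum : (∑ x, if b x = true then unif n x else 0)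
      + (∑ x, if b x = false then unif n x else 0) = 1 := by
    rw [← Finset.sum_add_distrib]
    have : ∀ x, (if b x = true then unif n x else 0) + (if b x = false then unif n x else 0)
        = ((2 : ℝ) ^ n)⁻¹ := by
      intro x
      cases b x <;> simp [unif]
    simp [this]
  have ht := key true
  have hf := key false
  have hent := Real.binEntropy_le_log_two (p := ∑ x, if b x = true then unif n x else 0)
  rw [Real.binEntropy_eq_negMulLog_add_negMulLog_one_sub, ← eq_sub_of_add_eq' hsum] at hent
  have hn' : (n : ℝ) * (∑ x, if b x = true then unif n x else 0)
      + n * (∑ x, if b x = false then unif n x else 0) = n := by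
    rw [← mul_add, hsum, mul_one]
  rw [condSMSE, Fintype.sum_bool]
  linarith
end

section
/- The majority function asymptotically achieves the noiseless SMSE lower bound: limsup over odd n → ∞ of [M(X^n | maj(X^n)) − (n − 2 ln 2)/4] ≤ 0, i.e., M(X^n | maj(X^n)) ≤ (n − 2 ln 2)/4 + o(1). -/
/-! Why the bound holds. Write `r_k = 2 Q_k - 1` for the conditional bias of the `k`-th bit, so that
`Q_k (1 - Q_k) = (1 - r_k²) / 4`. The natural-log entropy `h` satisfies
`ln 2 - h(Q) ≤ r² / 2 + r⁴ / 3` (`mul_one_sub_le_binEntropy`), hence `Q (1 - Q)` is bounded by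
`1/4 - (ln 2 - h(Q)) / 2 + r⁴ / 6`. By the chain rule (`sum_sum_binEntropy`) the entropies sum to
`H(X^n | maj) = (n - 1) ln 2`, because majority is balanced for odd `n`. This gives
`M ≤ (n - 2 ln 2) / 4 + (1/6) ∑ₖ E[r_k⁴]` (`condSMSE_majF_le`).

It remains to see that `∑ₖ E[r_k⁴] → 0`. With `m` coordinates left to reveal there are two bounds.
* Majority is symmetric, so given the prefix and the majority value the remaining bits are
  exchangeable, and `r_k` is the conditional mean of the average of the remaining `m` signs.
  By Jensen, `E[r_k⁴]` is at most the fourth moment of that average, which is at most `3 / m²`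
  (`biasErr_le_inv_sq`).
* Pairing each point with its flip in coordinate `k` bounds `E[r_k⁴]` by the probability that
  `k` is pivotal, which is at most twice a central binomial probability and so tends to `0`
  uniformly in `k` (`biasErr_le_midProb`, `tendsto_midProb`).

Since `∑ 3 / m²` converges, dominated convergence finishes the argument (`tendsto_tsum_min`).
-/

open Finset MeasureTheory

/-! ### Conditional probabilities along prefixes -/

lemma condQ_eq_sum {n : ℕ} (μ : (Fin n → Bool) → ℝ) (k : Fin n) (x : Fin n → Bool) :
    condQ μ k x = ∑ y, if (∀ i : Fin n, i < k → y i = x i) then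
      (if y k = true then 1 else 0) * μ y /
        (∑ z ∈ Finset.univ.filter (fun z : Fin n → Bool => ∀ i : Fin n, i < k → z i = x i), μ z)
      else 0 := by
  unfold condQ
  rw [Finset.sum_div, Finset.sum_filter]
  refine Finset.sum_congr rfl fun y _ => ?_
  by_cases h : (∀ i : Fin n, i < k → y i = x i) <;> by_cases h' : y k = true <;> simp [h, h']

/-- The tower property: against weights that depend only on the first coordinates, `condQ μ k`
integrates like the indicator of `x k = true`. -/
lemma sum_condQ_mul {n : ℕ} {μ : (Fin n → Bool) → ℝ} (hμ : ∀ x, 0 ≤ μ x) (k : Fin n)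
    (G : (Fin n → Bool) → ℝ)
    (hG : ∀ x y : Fin n → Bool, (∀ i : Fin n, i < k → y i = x i) → G y = G x) :
    ∑ x, μ x * (condQ μ k x * G x) = ∑ x, μ x * ((if x k = true then 1 else 0) * G x) := by
  set D : (Fin n → Bool) → ℝ := fun x =>
    ∑ z ∈ Finset.univ.filter (fun z : Fin n → Bool => ∀ i : Fin n, i < k → z i = x i), μ z with hD
  have hDc : ∀ x y : Fin n → Bool, (∀ i : Fin n, i < k → y i = x i) → D y = D x := by
    intro x y h
    simp only [hD]
    refine Finset.sum_congr (Finset.filter_congr fun z _ => ?_) fun _ _ => rfl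
    exact forall₂_congr fun i hi => by rw [h i hi]
  have h1 : ∀ x, μ x * (condQ μ k x * G x) = ∑ y, if (∀ i : Fin n, i < k → y i = x i) then
      ((if y k = true then 1 else 0) * μ y / D y * G y) * μ x else 0 := by
    intro x
    rw [condQ_eq_sum, Finset.sum_mul, Finset.mul_sum]
    refine Finset.sum_congr rfl fun y _ => ?_
    by_cases h : (∀ i : Fin n, i < k → y i = x i)
    · rw [if_pos h, if_pos h, hDc x y h, hG x y h]; ring
    · rw [if_neg h, if_neg h]; ring
  rw [Finset.sum_congr rfl fun x _ => h1 x, Finset.sum_comm]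
  refine Finset.sum_congr rfl fun y _ => ?_
  rw [← Finset.sum_filter, ← Finset.mul_sum]
  have h2 : (∑ x ∈ Finset.univ.filter (fun x : Fin n → Bool => ∀ i : Fin n, i < k → y i = x i),
      μ x) = D y := by
    simp only [hD]
    refine Finset.sum_congr (Finset.filter_congr fun z _ => ?_) fun _ _ => rfl
    exact forall₂_congr fun i hi => eq_comm
  rw [h2]
  by_cases h0 : D y = 0
  -- A prefix of mass zero carries no mass, so the junk value of `condQ` there is harmless.
  · have : μ y = 0 := by
      have h3 := (Finset.sum_eq_zero_iff_of_nonneg (fun z _ => hμ z)).1 h0 y (by simp)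
      exact h3
    simp [this]
  · field_simp

lemma condQ_congr {n : ℕ} (μ : (Fin n → Bool) → ℝ) (k : Fin n) (x y : Fin n → Bool)
    (h : ∀ i : Fin n, i < k → y i = x i) : condQ μ k y = condQ μ k x := by
  unfold condQ
  congr 1
  · refine Finset.sum_congr (Finset.filter_congr fun z _ => ?_) fun _ _ => rfl
    exact and_congr_left fun _ => forall₂_congr fun i hi => by rw [h i hi]
  · refine Finset.sum_congr (Finset.filter_congr fun z _ => ?_) fun _ _ => rfl
    exact forall₂_congr fun i hi => by rw [h i hi]

lemma condQ_nonneg {n : ℕ} {μ : (Fin n → Bool) → ℝ} (hμ : ∀ x, 0 ≤ μ x) (k : Fin n)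
    (x : Fin n → Bool) : 0 ≤ condQ μ k x :=
  div_nonneg (Finset.sum_nonneg fun _ _ => hμ _) (Finset.sum_nonneg fun _ _ => hμ _)

lemma condQ_le_one {n : ℕ} {μ : (Fin n → Bool) → ℝ} (hμ : ∀ x, 0 ≤ μ x) (k : Fin n)
    (x : Fin n → Bool) : condQ μ k x ≤ 1 := by
  refine div_le_one_of_le₀ ?_ (Finset.sum_nonneg fun _ _ => hμ _)
  refine Finset.sum_le_sum_of_subset_of_nonneg (fun z hz => ?_) fun _ _ _ => hμ _
  simp only [Finset.mem_filter] at hz ⊢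
  exact ⟨hz.1, hz.2.1⟩

/-- The `±1` value of a bit. -/
noncomputable def sgn (b : Bool) : ℝ := if b = true then 1 else -1

/-- The conditional mean `2 Q_k - 1` of the `±1` value of the `k`-th coordinate. -/
noncomputable def bias {n : ℕ} (μ : (Fin n → Bool) → ℝ) (k : Fin n) (x : Fin n → Bool) : ℝ :=
  2 * condQ μ k x - 1

lemma abs_bias_le_one {n : ℕ} {μ : (Fin n → Bool) → ℝ} (hμ : ∀ x, 0 ≤ μ x) (k : Fin n)
    (x : Fin n → Bool) : |bias μ k x| ≤ 1 := by
  have h1 := condQ_nonneg hμ k x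
  have h2 := condQ_le_one hμ k x
  rw [bias, abs_le]
  constructor <;> linarith

/-- The fourth moment of the bias, written through the tower property with the actual bit. -/
lemma sum_bias_pow_four {n : ℕ} {μ : (Fin n → Bool) → ℝ} (hμ : ∀ x, 0 ≤ μ x) (k : Fin n) :
    ∑ x, μ x * bias μ k x ^ 4 = ∑ x, μ x * (bias μ k x ^ 3 * sgn (x k)) := by
  have h := sum_condQ_mul hμ k (fun x => bias μ k x ^ 3) fun x y hxy => by
    simp only [bias, condQ_congr μ k x y hxy]
  have e1 : ∀ x, μ x * bias μ k x ^ 4 =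
      2 * (μ x * (condQ μ k x * bias μ k x ^ 3)) - μ x * bias μ k x ^ 3 := by
    intro x
    have : bias μ k x ^ 4 = (2 * condQ μ k x - 1) * bias μ k x ^ 3 := by
      rw [bias]; ring
    rw [this]; ring
  have e2 : ∀ x, μ x * (bias μ k x ^ 3 * sgn (x k)) =
      2 * (μ x * ((if x k = true then 1 else 0) * bias μ k x ^ 3)) - μ x * bias μ k x ^ 3 := by
    intro x
    unfold sgn
    split_ifs <;> ring
  simp only [e1, e2, Finset.sum_sub_distrib, ← Finset.mul_sum, h]

/-! ### The chain rule for entropy -/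

/-- The mass of the cylinder of all `y` that agree with `x` on the first `k` coordinates. -/
noncomputable def prefixMass {n : ℕ} (μ : (Fin n → Bool) → ℝ) (k : ℕ) (x : Fin n → Bool) : ℝ :=
  ∑ y ∈ Finset.univ.filter (fun y : Fin n → Bool => ∀ i : Fin n, (i : ℕ) < k → y i = x i), μ y

lemma prefixMass_pos {n : ℕ} {μ : (Fin n → Bool) → ℝ} (hμ : ∀ x, 0 ≤ μ x) (k : ℕ)
    {x : Fin n → Bool} (hx : 0 < μ x) : 0 < prefixMass μ k x :=
  lt_of_lt_of_le hx (Finset.single_le_sum (f := μ) (fun y _ => hμ y) (by simp))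

lemma prefixMass_zero {n : ℕ} (μ : (Fin n → Bool) → ℝ) (x : Fin n → Bool) :
    prefixMass μ 0 x = ∑ y, μ y := by
  simp [prefixMass]

lemma prefixMass_self {n : ℕ} (μ : (Fin n → Bool) → ℝ) (x : Fin n → Bool) :
    prefixMass μ n x = μ x := by
  have : (Finset.univ.filter (fun y : Fin n → Bool => ∀ i : Fin n, (i : ℕ) < n → y i = x i))
      = {x} := by
    ext y
    simp [funext_iff]
  rw [prefixMass, this, Finset.sum_singleton]

lemma prefixMass_succ {n : ℕ} {μ : (Fin n → Bool) → ℝ} (hμ : ∀ x, 0 ≤ μ x) (k : Fin n)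
    {x : Fin n → Bool} (hx : 0 < μ x) :
    prefixMass μ (k + 1) x = prefixMass μ k x *
      (if x k = true then condQ μ k x else 1 - condQ μ k x) := by
  have hP := prefixMass_pos hμ k hx
  set N : Bool → ℝ := fun b => ∑ y ∈ Finset.univ.filter
      (fun y : Fin n → Bool => (∀ i : Fin n, i < k → y i = x i) ∧ y k = b), μ y with hN
  have hQ : condQ μ k x = N true / prefixMass μ k x := rfl
  have hsplit : prefixMass μ k x = N true + N false := by
    simp only [prefixMass, hN, Finset.sum_filter, ← Finset.sum_add_distrib]
    refine Finset.sum_congr rfl fun y _ => ?_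
    simp only [Fin.lt_def]
    cases y k <;> simp
  have hsucc : prefixMass μ (k + 1) x = N (x k) := by
    simp only [prefixMass, hN]
    refine Finset.sum_congr (Finset.filter_congr fun y _ => ?_) fun _ _ => rfl
    constructor
    · intro h
      exact ⟨fun i hi => h i (by have := Fin.lt_def.1 hi; omega), h k (by omega)⟩
    · rintro ⟨h, hk⟩ i hi
      rcases Nat.lt_succ_iff_lt_or_eq.1 hi with h' | h'
      · exact h i (Fin.lt_def.2 h')
      · rw [Fin.ext h', hk]
  rw [hsucc, hQ]
  cases h : x k
  · simp only [Bool.false_eq_true, if_false]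
    field_simp
    linarith
  · simp only [if_true]
    field_simp

lemma sum_binEntropy_condQ {n : ℕ} {μ : (Fin n → Bool) → ℝ} (hμ : ∀ x, 0 ≤ μ x) (k : Fin n) :
    ∑ x, μ x * Real.binEntropy (condQ μ k x) =
      ∑ x, μ x * (Real.log (prefixMass μ k x) - Real.log (prefixMass μ (k + 1) x)) := by
  have h1 := sum_condQ_mul hμ k (fun x => Real.log (condQ μ k x)⁻¹) fun x y hxy => by
    simp only [condQ_congr μ k x y hxy]
  have h2 := sum_condQ_mul hμ k (fun x => Real.log (1 - condQ μ k x)⁻¹) fun x y hxy => by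
    simp only [condQ_congr μ k x y hxy]
  have e1 : ∀ x, μ x * Real.binEntropy (condQ μ k x) =
      μ x * (condQ μ k x * Real.log (condQ μ k x)⁻¹) + μ x * Real.log (1 - condQ μ k x)⁻¹ -
        μ x * (condQ μ k x * Real.log (1 - condQ μ k x)⁻¹) := by
    intro x
    rw [Real.binEntropy]; ring
  have e2 : ∀ x, μ x * (Real.log (prefixMass μ k x) - Real.log (prefixMass μ (k + 1) x)) =
      μ x * ((if x k = true then 1 else 0) * Real.log (condQ μ k x)⁻¹) +
        μ x * Real.log (1 - condQ μ k x)⁻¹ -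
        μ x * ((if x k = true then 1 else 0) * Real.log (1 - condQ μ k x)⁻¹) := by
    intro x
    rcases (hμ x).eq_or_lt with h0 | h0
    · simp [← h0]
    have hp := prefixMass_pos hμ k h0
    have hp' := prefixMass_pos hμ (k + 1) h0
    have hs := prefixMass_succ hμ k h0
    have hc : (if x k = true then condQ μ k x else 1 - condQ μ k x) ≠ 0 := by
      intro hc
      rw [hc, mul_zero] at hs
      exact hp'.ne' hs
    rw [hs, Real.log_mul hp.ne' hc, Real.log_inv, Real.log_inv]
    split_ifs <;> ring
  simp only [e1, e2, Finset.sum_sub_distrib, Finset.sum_add_distrib, h1, h2]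

/-- The chain rule `∑ₖ H(X_k | X^{k-1}) = H(X^n)` for a possibly unnormalized `μ`. -/
lemma sum_sum_binEntropy {n : ℕ} {μ : (Fin n → Bool) → ℝ} (hμ : ∀ x, 0 ≤ μ x) :
    ∑ k : Fin n, ∑ x, μ x * Real.binEntropy (condQ μ k x) =
      ∑ x, μ x * (Real.log (∑ y, μ y) - Real.log (μ x)) := by
  simp only [sum_binEntropy_condQ hμ]
  rw [Finset.sum_comm]
  refine Finset.sum_congr rfl fun x _ => ?_
  rw [← Finset.mul_sum]
  congr 1
  rw [Fin.sum_univ_eq_sum_range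
    (fun k => Real.log (prefixMass μ k x) - Real.log (prefixMass μ (k + 1) x)),
    Finset.sum_range_sub', prefixMass_zero, prefixMass_self]

/-! ### Comparing quadratic error and entropy -/

lemma log_one_add_le_cubic {r : ℝ} (hr : -1 < r) :
    Real.log (1 + r) ≤ r - r ^ 2 / 2 + r ^ 3 / 3 := by
  set f : ℝ → ℝ := fun r => r - r ^ 2 / 2 + r ^ 3 / 3 - Real.log (1 + r) with hf
  have hd : ∀ r : ℝ, -1 < r → HasDerivAt f (r ^ 3 / (1 + r)) r := by
    intro r hr
    have h1 : (1 + r) ≠ 0 := by linarith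
    have := ((((hasDerivAt_id r).sub (((hasDerivAt_id r).pow 2).div_const 2)).add
      (((hasDerivAt_id r).pow 3).div_const 3))).sub (((hasDerivAt_id r).const_add 1).log h1)
    refine this.congr_deriv ?_
    simp only [id]
    field_simp
    ring
  have hf0 : f 0 = 0 := by simp [hf]
  suffices 0 ≤ f r by
    simp only [hf] at this
    linarith
  rcases le_total 0 r with h | h
  · have hm : MonotoneOn f (Set.Icc 0 r) := by
      refine monotoneOn_of_deriv_nonneg (convex_Icc _ _)
        (fun x hx => (hd x (by linarith [hx.1])).continuousAt.continuousWithinAt) ?_ ?_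
      · intro x hx
        rw [interior_Icc] at hx
        exact (hd x (by linarith [hx.1])).differentiableAt.differentiableWithinAt
      · intro x hx
        rw [interior_Icc] at hx
        rw [(hd x (by linarith [hx.1])).deriv]
        have := hx.1
        positivity
    have := hm (Set.left_mem_Icc.2 h) (Set.right_mem_Icc.2 h) h
    linarith
  · have hm : AntitoneOn f (Set.Icc r 0) := by
      refine antitoneOn_of_deriv_nonpos (convex_Icc _ _)
        (fun x hx => (hd x (by linarith [hx.1])).continuousAt.continuousWithinAt) ?_ ?_
      · intro x hx
        rw [interior_Icc] at hx
        exact (hd x (by linarith [hx.1])).differentiableAt.differentiableWithinAt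
      · intro x hx
        rw [interior_Icc] at hx
        rw [(hd x (by linarith [hx.1])).deriv]
        refine div_nonpos_of_nonpos_of_nonneg ?_ (by linarith [hx.1])
        exact (Odd.pow_neg (by decide) hx.2).le
    have := hm (Set.left_mem_Icc.2 h) (Set.right_mem_Icc.2 h) h
    linarith

lemma mul_log_one_add_le {r : ℝ} (hr : -1 ≤ r) :
    (1 + r) * Real.log (1 + r) ≤ (1 + r) * (r - r ^ 2 / 2 + r ^ 3 / 3) := by
  rcases hr.eq_or_lt with h | h
  · simp [← h]
  · exact mul_le_mul_of_nonneg_left (log_one_add_le_cubic h) (by linarith)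

/-- The variance of a bit is at most its entropy, affinely rescaled so that the two agree to second
order at `1/2`, up to a fourth-order error. -/
lemma mul_one_sub_le_binEntropy {q : ℝ} (h0 : 0 ≤ q) (h1 : q ≤ 1) :
    q * (1 - q) ≤ 1 / 4 - (Real.log 2 - Real.binEntropy q) / 2 + (2 * q - 1) ^ 4 / 6 := by
  set r := 2 * q - 1 with hr
  have hq : q = (1 + r) / 2 := by rw [hr]; ring
  have hq' : 1 - q = (1 + -r) / 2 := by rw [hr]; ring
  have a1 := mul_log_one_add_le (r := r) (by linarith)
  have a2 := mul_log_one_add_le (r := -r) (by linarith)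
  have key : ∀ s : ℝ, (s / 2) * Real.log (s / 2)⁻¹ = s / 2 * Real.log 2 - s * Real.log s / 2 := by
    intro s
    rcases eq_or_ne s 0 with rfl | hs
    · simp
    · rw [Real.log_inv, Real.log_div hs two_ne_zero]; ring
  have hb : Real.binEntropy q = Real.log 2 -
      ((1 + r) * Real.log (1 + r) + (1 + -r) * Real.log (1 + -r)) / 2 := by
    rw [Real.binEntropy, hq', hq, key, key]; ring
  rw [hb, hq', hq]
  nlinarith [a1, a2]

/-! ### Flipping a coordinate and moments of sums of signs -/

/-- Flipping the `a`-th bit. -/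
def flipBit {n : ℕ} (a : Fin n) (x : Fin n → Bool) : Fin n → Bool := Function.update x a (!x a)

lemma flipBit_involutive {n : ℕ} (a : Fin n) : Function.Involutive (flipBit a) := by
  intro x
  simp [flipBit]

lemma flipBit_self {n : ℕ} (a : Fin n) (x : Fin n → Bool) : flipBit a x a = !x a := by
  simp [flipBit]

lemma flipBit_of_ne {n : ℕ} {a i : Fin n} (h : i ≠ a) (x : Fin n → Bool) :
    flipBit a x i = x i := by
  simp [flipBit, h]

lemma sum_flipBit {n : ℕ} (a : Fin n) (f : (Fin n → Bool) → ℝ) :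
    ∑ x, f (flipBit a x) = ∑ x, f x :=
  Equiv.sum_comp (flipBit_involutive a).toPerm f

lemma sgn_not (b : Bool) : sgn (!b) = -sgn b := by
  cases b <;> simp [sgn]

lemma sgn_sq (b : Bool) : sgn b ^ 2 = 1 := by
  cases b <;> simp [sgn]

lemma abs_sgn (b : Bool) : |sgn b| = 1 := by
  cases b <;> simp [sgn]

lemma sum_sgn_moments {n : ℕ} (J : Finset (Fin n)) :
    ∑ x : Fin n → Bool, (∑ j ∈ J, sgn (x j)) ^ 2 = J.card * 2 ^ n ∧
    ∑ x : Fin n → Bool, (∑ j ∈ J, sgn (x j)) ^ 4 ≤ 3 * (J.card : ℝ) ^ 2 * 2 ^ n := by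
  induction J using Finset.induction_on with
  | empty => simp
  | insert a J ha ih =>
    obtain ⟨h2, h4⟩ := ih
    have hflip : ∀ x : Fin n → Bool, ∑ j ∈ J, sgn (flipBit a x j) = ∑ j ∈ J, sgn (x j) := by
      intro x
      refine Finset.sum_congr rfl fun j hj => ?_
      rw [flipBit_of_ne (by rintro rfl; exact ha hj)]
    have hone : ∑ _x : Fin n → Bool, (1 : ℝ) = 2 ^ n := by simp
    -- Averaging with the flip of bit `a` removes the odd powers of the new sign.
    have s2 := sum_flipBit a fun x : Fin n → Bool => (∑ j ∈ insert a J, sgn (x j)) ^ 2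
    have s4 := sum_flipBit a fun x : Fin n → Bool => (∑ j ∈ insert a J, sgn (x j)) ^ 4
    simp only [Finset.sum_insert ha, hflip, flipBit_self, sgn_not] at s2 s4 ⊢
    have t2 : ∑ x : Fin n → Bool, (sgn (x a) + ∑ j ∈ J, sgn (x j)) ^ 2 +
        ∑ x : Fin n → Bool, (-sgn (x a) + ∑ j ∈ J, sgn (x j)) ^ 2 =
        2 * ∑ x : Fin n → Bool, (∑ j ∈ J, sgn (x j)) ^ 2 + 2 * ∑ _x : Fin n → Bool, (1 : ℝ) := by
      rw [← Finset.sum_add_distrib, Finset.mul_sum, Finset.mul_sum, ← Finset.sum_add_distrib]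
      refine Finset.sum_congr rfl fun x _ => ?_
      linear_combination 2 * sgn_sq (x a)
    have t4 : ∑ x : Fin n → Bool, (sgn (x a) + ∑ j ∈ J, sgn (x j)) ^ 4 +
        ∑ x : Fin n → Bool, (-sgn (x a) + ∑ j ∈ J, sgn (x j)) ^ 4 =
        2 * ∑ x : Fin n → Bool, (∑ j ∈ J, sgn (x j)) ^ 4 +
        12 * ∑ x : Fin n → Bool, (∑ j ∈ J, sgn (x j)) ^ 2 +
        2 * ∑ _x : Fin n → Bool, (1 : ℝ) := by
      simp only [Finset.mul_sum, ← Finset.sum_add_distrib]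
      refine Finset.sum_congr rfl fun x _ => ?_
      have e := sgn_sq (x a)
      linear_combination (12 * (∑ j ∈ J, sgn (x j)) ^ 2 + 2 * (sgn (x a) ^ 2 + 1)) * e
    rw [s2, h2, hone] at t2
    rw [s4, h2, hone] at t4
    have hp : (0 : ℝ) < 2 ^ n := by positivity
    rw [Finset.card_insert_of_notMem ha]
    push_cast
    constructor
    · linarith
    · nlinarith

/-! ### The two halves of the cube cut out by majority -/

/-- The unnormalized pmf `x ↦ P[X^n = x, maj(X^n) = c]`. -/
noncomputable def majHalf (n : ℕ) (c : Bool) : (Fin n → Bool) → ℝ :=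
  fun x => if majF n x = c then unif n x else 0

lemma unif_pos (n : ℕ) (x : Fin n → Bool) : 0 < unif n x := by
  unfold unif; positivity

lemma majHalf_nonneg (n : ℕ) (c : Bool) (x : Fin n → Bool) : 0 ≤ majHalf n c x := by
  unfold majHalf
  split_ifs
  · exact (unif_pos n x).le
  · exact le_rfl

lemma sum_unif (n : ℕ) : ∑ x, unif n x = 1 := by
  simp [unif]

lemma majHalf_add (n : ℕ) (x : Fin n → Bool) :
    majHalf n true x + majHalf n false x = unif n x := by
  unfold majHalf
  cases majF n x <;> simp

lemma hw_eq_sum {n : ℕ} (x : Fin n → Bool) : hw x = ∑ i, if x i = true then 1 else 0 := by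
  rw [hw, Finset.card_filter]

lemma majHalf_comp_perm {n : ℕ} (c : Bool) (e : Equiv.Perm (Fin n)) (x : Fin n → Bool) :
    majHalf n c (x ∘ e) = majHalf n c x := by
  have : hw (x ∘ e) = hw x := by
    rw [hw_eq_sum, hw_eq_sum]
    exact Equiv.sum_comp e (fun i => if x i = true then 1 else 0)
  have hm : majF n (x ∘ e) = majF n x := by simp only [majF, this]
  simp only [majHalf, hm, unif]

lemma hw_not {n : ℕ} (x : Fin n → Bool) : hw (fun i => !x i) + hw x = n := by
  rw [hw_eq_sum, hw_eq_sum, ← Finset.sum_add_distrib]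
  have : ∀ i, ((if (!x i) = true then 1 else 0) + if x i = true then 1 else 0) = 1 := by
    intro i
    cases x i <;> simp
  rw [Finset.sum_congr rfl fun i _ => this i]
  simp

/-- For odd `n` complementation exchanges the two halves, so each has mass `1/2`. -/
lemma sum_majHalf {n : ℕ} (hn : Odd n) (c : Bool) : ∑ x, majHalf n c x = 1 / 2 := by
  have hinv : Function.Involutive (fun (x : Fin n → Bool) i => !x i) := by
    intro x; simp
  have h1 : ∑ x, majHalf n true x = ∑ x, majHalf n false x := by
    rw [← Equiv.sum_comp hinv.toPerm (majHalf n false)]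
    refine Finset.sum_congr rfl fun x _ => ?_
    have h := hw_not x
    obtain ⟨t, ht⟩ := hn
    simp only [Function.Involutive.coe_toPerm, majHalf, majF, unif]
    by_cases h' : n < 2 * hw x
    · have : ¬ n < 2 * hw (fun i => !x i) := by omega
      simp [h', this]
    · have : n < 2 * hw (fun i => !x i) := by omega
      simp [h', this]
  have h2 : ∑ x, majHalf n true x + ∑ x, majHalf n false x = 1 := by
    rw [← Finset.sum_add_distrib, ← sum_unif n]
    exact Finset.sum_congr rfl fun x _ => majHalf_add n x
  cases c <;> linarith

/-! ### The fourth moment of the bias -/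

/-- By exchangeability, the conditional mean of the `k`-th sign is also that of every later sign. -/
lemma sum_bias_exchange {n : ℕ} (c : Bool) {k j : Fin n} (hkj : k ≤ j) :
    ∑ x, majHalf n c x * (bias (majHalf n c) k x ^ 3 * sgn (x j)) =
      ∑ x, majHalf n c x * bias (majHalf n c) k x ^ 4 := by
  rw [sum_bias_pow_four (majHalf_nonneg n c)]
  have hinv : Function.Involutive (fun x : Fin n → Bool => x ∘ Equiv.swap k j) := by
    intro x
    ext i
    simp
  rw [← Equiv.sum_comp hinv.toPerm]
  refine Finset.sum_congr rfl fun x _ => ?_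
  have hb : bias (majHalf n c) k (x ∘ Equiv.swap k j) = bias (majHalf n c) k x := by
    unfold bias
    rw [condQ_congr _ k x (x ∘ Equiv.swap k j)]
    intro i hi
    rw [Function.comp_apply, Equiv.swap_apply_of_ne_of_ne hi.ne (hi.trans_le hkj).ne]
  simp only [Function.Involutive.coe_toPerm, majHalf_comp_perm, hb, Function.comp_apply,
    Equiv.swap_apply_right]

/-- Jensen's inequality for the conditional mean of the average of the remaining signs. -/
lemma sum_bias_le_average {n : ℕ} (c : Bool) (k : Fin n) :
    ∑ x, majHalf n c x * bias (majHalf n c) k x ^ 4 ≤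
      ∑ x, majHalf n c x * ((∑ j ∈ Finset.Ici k, sgn (x j)) / (n - k : ℕ)) ^ 4 := by
  have hm : (0 : ℝ) < (n - k : ℕ) := by
    have := k.isLt
    exact_mod_cast Nat.sub_pos_of_lt this
  have h1 : ∑ x, majHalf n c x * (bias (majHalf n c) k x ^ 3 *
      ((∑ j ∈ Finset.Ici k, sgn (x j)) / (n - k : ℕ))) =
      ∑ x, majHalf n c x * bias (majHalf n c) k x ^ 4 := by
    have e : ∀ x : Fin n → Bool, majHalf n c x * (bias (majHalf n c) k x ^ 3 *
        ((∑ j ∈ Finset.Ici k, sgn (x j)) / (n - k : ℕ))) =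
        (∑ j ∈ Finset.Ici k, majHalf n c x * (bias (majHalf n c) k x ^ 3 * sgn (x j))) /
          (n - k : ℕ) := by
      intro x
      rw [← Finset.mul_sum, ← Finset.mul_sum]; ring
    rw [Finset.sum_congr rfl fun x _ => e x, ← Finset.sum_div, Finset.sum_comm,
      Finset.sum_congr rfl fun j hj => sum_bias_exchange c (Finset.mem_Ici.1 hj),
      Finset.sum_const, Fin.card_Ici, nsmul_eq_mul, mul_div_assoc, mul_div_cancel₀]
    exact hm.ne'
  -- Summing the inequality `4 r³ u ≤ 3 r⁴ + u⁴` gives the claim.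
  have h2 : ∑ x, 4 * (majHalf n c x * (bias (majHalf n c) k x ^ 3 *
      ((∑ j ∈ Finset.Ici k, sgn (x j)) / (n - k : ℕ)))) ≤
      ∑ x, (3 * (majHalf n c x * bias (majHalf n c) k x ^ 4) +
        majHalf n c x * ((∑ j ∈ Finset.Ici k, sgn (x j)) / (n - k : ℕ)) ^ 4) := by
    refine Finset.sum_le_sum fun x _ => ?_
    set r := bias (majHalf n c) k x
    set u := (∑ j ∈ Finset.Ici k, sgn (x j)) / ((n - k : ℕ) : ℝ)
    have h : 4 * (r ^ 3 * u) ≤ 3 * r ^ 4 + u ^ 4 := by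
      have : 0 ≤ (u - r) ^ 2 * ((u + r) ^ 2 + 2 * r ^ 2) := by positivity
      linarith
    have := mul_le_mul_of_nonneg_left h (majHalf_nonneg n c x)
    linarith
  rw [← Finset.mul_sum, Finset.sum_add_distrib, ← Finset.mul_sum, h1] at h2
  linarith

/-- The total fourth moment of the bias at time `k`. -/
noncomputable def biasErr (n : ℕ) (k : Fin n) : ℝ :=
  ∑ c : Bool, ∑ x, majHalf n c x * bias (majHalf n c) k x ^ 4

lemma biasErr_le_inv_sq {n : ℕ} (k : Fin n) : biasErr n k ≤ 3 / ((n - k : ℕ) : ℝ) ^ 2 := by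
  have hm : (0 : ℝ) < (n - k : ℕ) := by
    have := k.isLt
    exact_mod_cast Nat.sub_pos_of_lt this
  have h1 : biasErr n k ≤ ∑ c : Bool, ∑ x, majHalf n c x *
      ((∑ j ∈ Finset.Ici k, sgn (x j)) / (n - k : ℕ)) ^ 4 :=
    Finset.sum_le_sum fun c _ => sum_bias_le_average c k
  have h2 := (sum_sgn_moments (Finset.Ici k)).2
  rw [Fin.card_Ici] at h2
  refine h1.trans ?_
  rw [Fintype.sum_bool, ← Finset.sum_add_distrib]
  have e : ∀ x : Fin n → Bool,
      majHalf n true x * ((∑ j ∈ Finset.Ici k, sgn (x j)) / (n - k : ℕ)) ^ 4 +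
      majHalf n false x * ((∑ j ∈ Finset.Ici k, sgn (x j)) / (n - k : ℕ)) ^ 4 =
      ((2 : ℝ) ^ n)⁻¹ / ((n - k : ℕ) : ℝ) ^ 4 * (∑ j ∈ Finset.Ici k, sgn (x j)) ^ 4 := by
    intro x
    rw [← add_mul, majHalf_add, div_pow, unif]; ring
  rw [Finset.sum_congr rfl fun x _ => e x, ← Finset.mul_sum]
  calc _ ≤ ((2 : ℝ) ^ n)⁻¹ / ((n - k : ℕ) : ℝ) ^ 4 * (3 * ((n - k : ℕ) : ℝ) ^ 2 * 2 ^ n) := by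
        gcongr
    _ = _ := by field_simp

lemma card_hw_le (n j : ℕ) :
    (Finset.univ.filter fun x : Fin n → Bool => hw x = j).card ≤ n.choose j := by
  have : (Finset.powersetCard j (Finset.univ : Finset (Fin n))).card = n.choose j := by
    rw [Finset.card_powersetCard, Finset.card_univ, Fintype.card_fin]
  rw [← this]
  refine Finset.card_le_card_of_injOn (fun x => Finset.univ.filter fun i => x i = true) ?_ ?_
  · intro x hx
    simp only [Finset.coe_filter, Finset.mem_univ, true_and, Set.mem_ofPred_eq] at hx
    simp [Finset.mem_powersetCard, ← hx, hw]
  · intro x _ y _ h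
    funext i
    have := Finset.ext_iff.1 h i
    simp only [Finset.mem_filter, Finset.mem_univ, true_and] at this
    exact Bool.eq_iff_iff.2 this

lemma hw_flipBit {n : ℕ} (k : Fin n) (x : Fin n → Bool) :
    hw (flipBit k x) + (if x k = true then 1 else 0) = hw x + (if x k = true then 0 else 1) := by
  rw [hw_eq_sum, hw_eq_sum, ← Finset.add_sum_erase _ _ (Finset.mem_univ k),
    ← Finset.add_sum_erase _ (fun i => if x i = true then 1 else 0) (Finset.mem_univ k)]
  have : ∑ i ∈ Finset.univ.erase k, (if flipBit k x i = true then 1 else 0) =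
      ∑ i ∈ Finset.univ.erase k, (if x i = true then 1 else 0) :=
    Finset.sum_congr rfl fun i hi => by rw [flipBit_of_ne (Finset.ne_of_mem_erase hi)]
  rw [this, flipBit_self]
  cases x k <;> simp <;> omega

/-- Coordinate `k` is pivotal only on the two middle layers of the cube. -/
lemma card_pivotal_le (t : ℕ) (k : Fin (2 * t + 1)) :
    (Finset.univ.filter fun x : Fin (2 * t + 1) → Bool =>
      majF (2 * t + 1) x ≠ majF (2 * t + 1) (flipBit k x)).card ≤ (t + 1).centralBinom := by
  have hsub : (Finset.univ.filter fun x : Fin (2 * t + 1) → Bool =>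
      majF (2 * t + 1) x ≠ majF (2 * t + 1) (flipBit k x)) ⊆
      (Finset.univ.filter fun x : Fin (2 * t + 1) → Bool => hw x = t) ∪
      (Finset.univ.filter fun x : Fin (2 * t + 1) → Bool => hw x = t + 1) := by
    intro x hx
    simp only [Finset.mem_filter, Finset.mem_univ, true_and, Finset.mem_union, majF, ne_eq,
      decide_eq_decide] at hx ⊢
    have h := hw_flipBit k x
    by_contra hcon
    apply hx
    split_ifs at h <;> omega
  refine (Finset.card_le_card hsub).trans ((Finset.card_union_le _ _).trans ?_)
  refine (add_le_add (card_hw_le _ _) (card_hw_le _ _)).trans ?_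
  rw [Nat.centralBinom_eq_two_mul_choose, show 2 * (t + 1) = 2 * t + 1 + 1 by ring,
    Nat.choose_succ_succ (2 * t + 1) t]

/-- The central binomial probability `P[Bin(2t+2, 1/2) = t+1]`. -/
noncomputable def midProb (t : ℕ) : ℝ := ((t + 1).centralBinom : ℝ) / 4 ^ (t + 1)

lemma biasErr_le_midProb (t : ℕ) (k : Fin (2 * t + 1)) : biasErr (2 * t + 1) k ≤ 2 * midProb t := by
  have h : ∀ c : Bool, ∑ x, majHalf (2 * t + 1) c x * bias (majHalf (2 * t + 1) c) k x ^ 4 ≤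
      midProb t := by
    intro c
    set μ := majHalf (2 * t + 1) c with hμ
    have hμ0 : ∀ x, 0 ≤ μ x := majHalf_nonneg _ c
    have hb : ∀ x, bias μ k (flipBit k x) = bias μ k x := by
      intro x
      unfold bias
      rw [condQ_congr μ k x (flipBit k x) fun i hi => flipBit_of_ne hi.ne x]
    have h1 := sum_bias_pow_four hμ0 k
    have h3 : 2 * ∑ x, μ x * bias μ k x ^ 4 =
        ∑ x, (μ x - μ (flipBit k x)) * (bias μ k x ^ 3 * sgn (x k)) := by
      rw [two_mul]
      nth_rewrite 1 [h1]
      have h2' : ∑ x, μ x * bias μ k x ^ 4 =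
          ∑ x, μ (flipBit k x) * (bias μ k x ^ 3 * -sgn (x k)) := by
        rw [h1, ← sum_flipBit k]
        simp only [hb, flipBit_self, sgn_not]
      rw [h2', ← Finset.sum_add_distrib]
      exact Finset.sum_congr rfl fun x _ => by ring
    have h4 : ∑ x, (μ x - μ (flipBit k x)) * (bias μ k x ^ 3 * sgn (x k)) ≤
        ∑ x, if majF (2 * t + 1) x ≠ majF (2 * t + 1) (flipBit k x) then
          ((2 : ℝ) ^ (2 * t + 1))⁻¹ else 0 := by
      refine Finset.sum_le_sum fun x _ => (le_abs_self _).trans ?_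
      rw [abs_mul, abs_mul, abs_sgn, mul_one, abs_pow]
      have hb1 : |bias μ k x| ^ 3 ≤ 1 := pow_le_one₀ (abs_nonneg _) (abs_bias_le_one hμ0 k x)
      refine (mul_le_of_le_one_right (abs_nonneg _) hb1).trans ?_
      have hpos : (0 : ℝ) ≤ ((2 : ℝ) ^ (2 * t + 1))⁻¹ := by positivity
      simp only [hμ, majHalf, unif]
      cases majF (2 * t + 1) x <;> cases majF (2 * t + 1) (flipBit k x) <;> cases c <;> simp
    rw [← Finset.sum_filter, Finset.sum_const, nsmul_eq_mul] at h4
    have h5 : ((Finset.univ.filter fun x : Fin (2 * t + 1) → Bool =>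
        majF (2 * t + 1) x ≠ majF (2 * t + 1) (flipBit k x)).card : ℝ) ≤
        ((t + 1).centralBinom : ℝ) := by exact_mod_cast card_pivotal_le t k
    have h6 := mul_le_mul_of_nonneg_right h5
      (show (0 : ℝ) ≤ ((2 : ℝ) ^ (2 * t + 1))⁻¹ by positivity)
    have h7 : ((t + 1).centralBinom : ℝ) * ((2 : ℝ) ^ (2 * t + 1))⁻¹ = 2 * midProb t := by
      have : (4 : ℝ) ^ (t + 1) = 2 * 2 ^ (2 * t + 1) := by
        rw [show (4 : ℝ) = 2 ^ 2 by norm_num, ← pow_mul]; ring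
      rw [midProb, this]
      field_simp
    linarith
  rw [biasErr, Fintype.sum_bool]
  linarith [h true, h false]

lemma centralBinom_sq_le (t : ℕ) : t.centralBinom ^ 2 * (2 * t + 1) ≤ 16 ^ t := by
  induction t with
  | zero => simp
  | succ t ih =>
    have h := Nat.succ_mul_centralBinom_succ t
    have hp : 0 < (t + 1) ^ 2 := by positivity
    refine Nat.le_of_mul_le_mul_left ?_ hp
    calc (t + 1) ^ 2 * ((t + 1).centralBinom ^ 2 * (2 * (t + 1) + 1))
        = ((t + 1) * (t + 1).centralBinom) ^ 2 * (2 * t + 3) := by ring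
      _ = 4 * ((2 * t + 1) * (2 * t + 3)) * (t.centralBinom ^ 2 * (2 * t + 1)) := by rw [h]; ring
      _ ≤ 4 * (4 * (t + 1) ^ 2) * 16 ^ t := by
        have h4 : (2 * t + 1) * (2 * t + 3) ≤ 4 * (t + 1) ^ 2 := by nlinarith
        exact Nat.mul_le_mul (Nat.mul_le_mul_left 4 h4) ih
      _ = (t + 1) ^ 2 * 16 ^ (t + 1) := by ring

lemma midProb_nonneg (t : ℕ) : 0 ≤ midProb t := by
  unfold midProb; positivity

lemma tendsto_midProb : Filter.Tendsto midProb Filter.atTop (nhds 0) := by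
  have hle : ∀ t, midProb t ≤ Real.sqrt (1 / ((t : ℝ) + 1)) := by
    intro t
    refine Real.le_sqrt_of_sq_le ?_
    have h : ((t + 1).centralBinom : ℝ) ^ 2 * (2 * ((t : ℝ) + 1) + 1) ≤ 16 ^ (t + 1) := by
      exact_mod_cast centralBinom_sq_le (t + 1)
    rw [midProb, div_pow, ← pow_mul, mul_comm (t + 1) 2, pow_mul,
      show (4 : ℝ) ^ 2 = 16 by norm_num, div_le_div_iff₀ (by positivity) (by positivity)]
    have : (0 : ℝ) ≤ ((t + 1).centralBinom : ℝ) ^ 2 * ((t : ℝ) + 2) := by positivity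
    nlinarith
  have hlim : Filter.Tendsto (fun t : ℕ => Real.sqrt (1 / ((t : ℝ) + 1))) Filter.atTop (nhds 0) := by
    have := (Real.continuous_sqrt.tendsto 0).comp (tendsto_one_div_add_atTop_nhds_zero_nat (𝕜 := ℝ))
    rwa [Real.sqrt_zero] at this
  exact squeeze_zero midProb_nonneg hle hlim

/-- By dominated convergence, with the summable majorant `3 / m²`. -/
lemma tendsto_tsum_min :
    Filter.Tendsto (fun t => ∑' m : ℕ, min (3 / ((m : ℝ) + 1) ^ 2) (2 * midProb t))
      Filter.atTop (nhds 0) := by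
  have hs : Summable fun m : ℕ => 3 / ((m : ℝ) + 1) ^ 2 := by
    have h := (summable_nat_add_iff 1).2 (Real.summable_one_div_nat_pow.2 one_lt_two)
    refine (h.mul_left 3).congr fun m => ?_
    push_cast
    ring
  have := tendsto_tsum_of_dominated_convergence (𝓕 := Filter.atTop)
    (f := fun t (m : ℕ) => min (3 / ((m : ℝ) + 1) ^ 2) (2 * midProb t)) (g := fun _ => (0 : ℝ)) hs
    (fun m => by
      have h1 := (tendsto_midProb.const_mul 2)
      rw [mul_zero] at h1
      have h2 := (tendsto_const_nhds (x := 3 / ((m : ℝ) + 1) ^ 2)).min h1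
      rwa [min_eq_right (by positivity)] at h2)
    (Filter.Eventually.of_forall fun t m => by
      have h0 := midProb_nonneg t
      rw [Real.norm_of_nonneg (le_min (by positivity) (by positivity))]
      exact min_le_left _ _)
  simpa using this

lemma sum_biasErr_le (t : ℕ) : ∑ k : Fin (2 * t + 1), biasErr (2 * t + 1) k ≤
    ∑' m : ℕ, min (3 / ((m : ℝ) + 1) ^ 2) (2 * midProb t) := by
  have h0 := midProb_nonneg t
  have hs : Summable fun m : ℕ => min (3 / ((m : ℝ) + 1) ^ 2) (2 * midProb t) := by
    have h := (summable_nat_add_iff 1).2 (Real.summable_one_div_nat_pow.2 one_lt_two)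
    have h3 : Summable fun m : ℕ => 3 / ((m : ℝ) + 1) ^ 2 := by
      refine (h.mul_left 3).congr fun m => ?_
      push_cast
      ring
    exact Summable.of_nonneg_of_le (fun m => le_min (by positivity) (by positivity))
      (fun m => min_le_left _ _) h3
  calc ∑ k : Fin (2 * t + 1), biasErr (2 * t + 1) k
      = ∑ k : Fin (2 * t + 1), biasErr (2 * t + 1) (Fin.rev k) :=
        (Equiv.sum_comp Fin.revPerm (biasErr (2 * t + 1))).symm
    _ ≤ ∑ k : Fin (2 * t + 1), min (3 / (((k : ℕ) : ℝ) + 1) ^ 2) (2 * midProb t) := by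
        refine Finset.sum_le_sum fun k _ => le_min ?_ (biasErr_le_midProb t _)
        refine (biasErr_le_inv_sq _).trans_eq ?_
        have : 2 * t + 1 - ((Fin.rev k : Fin (2 * t + 1)) : ℕ) = (k : ℕ) + 1 := by
          rw [Fin.val_rev]; omega
        rw [this]
        push_cast
        rfl
    _ = ∑ m ∈ Finset.range (2 * t + 1), min (3 / ((m : ℝ) + 1) ^ 2) (2 * midProb t) :=
        Fin.sum_univ_eq_sum_range (fun m => min (3 / ((m : ℝ) + 1) ^ 2) (2 * midProb t)) _
    _ ≤ _ := hs.sum_le_tsum _ fun m _ => le_min (by positivity) (by positivity)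

/-! ### Assembly -/

/-- Each half carries entropy contribution `(n - 1) (ln 2) / 2`, being uniform on `2^(n-1)`
points with total mass `1/2`. -/
lemma sum_entropy_majHalf {n : ℕ} (hn : Odd n) (c : Bool) :
    ∑ k : Fin n, ∑ x, majHalf n c x * Real.binEntropy (condQ (majHalf n c) k x) =
      ((n : ℝ) - 1) * Real.log 2 / 2 := by
  rw [sum_sum_binEntropy (majHalf_nonneg n c), sum_majHalf hn]
  have e : ∀ x, majHalf n c x * (Real.log (1 / 2) - Real.log (majHalf n c x)) =
      majHalf n c x * (((n : ℝ) - 1) * Real.log 2) := by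
    intro x
    by_cases h : majF n x = c
    · have : majHalf n c x = ((2 : ℝ) ^ n)⁻¹ := by simp [majHalf, h, unif]
      rw [this, Real.log_inv, Real.log_pow, one_div, Real.log_inv]; ring
    · have : majHalf n c x = 0 := by simp [majHalf, h]
      rw [this, zero_mul, zero_mul]
  rw [Finset.sum_congr rfl fun x _ => e x, ← Finset.sum_mul, sum_majHalf hn]
  ring

lemma condSMSE_majF_le {n : ℕ} (hn : Odd n) :
    condSMSE (unif n) (majF n) ≤
      ((n : ℝ) - 2 * Real.log 2) / 4 + (∑ k, biasErr n k) / 6 := by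
  have hc : ∀ c : Bool, smse (majHalf n c) ≤ n * (1 / 4 - Real.log 2 / 2) / 2 +
      ((n : ℝ) - 1) * Real.log 2 / 4 +
      (∑ k : Fin n, ∑ x, majHalf n c x * bias (majHalf n c) k x ^ 4) / 6 := by
    intro c
    have hk : ∀ k : Fin n, smseTerm (majHalf n c) k ≤ (1 / 4 - Real.log 2 / 2) / 2 +
        (∑ x, majHalf n c x * Real.binEntropy (condQ (majHalf n c) k x)) / 2 +
        (∑ x, majHalf n c x * bias (majHalf n c) k x ^ 4) / 6 := by
      intro k
      have h1 : smseTerm (majHalf n c) k ≤ ∑ x, (majHalf n c x * (1 / 4 - Real.log 2 / 2) +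
          majHalf n c x * Real.binEntropy (condQ (majHalf n c) k x) / 2 +
          majHalf n c x * bias (majHalf n c) k x ^ 4 / 6) := by
        refine Finset.sum_le_sum fun x _ => ?_
        have h := mul_le_mul_of_nonneg_left
          (mul_one_sub_le_binEntropy (condQ_nonneg (majHalf_nonneg n c) k x)
            (condQ_le_one (majHalf_nonneg n c) k x)) (majHalf_nonneg n c x)
        rw [bias]
        linarith
      rw [Finset.sum_add_distrib, Finset.sum_add_distrib, ← Finset.sum_mul, sum_majHalf hn,
        ← Finset.sum_div, ← Finset.sum_div] at h1
      linarith
    have h2 := Finset.sum_le_sum fun k (_ : k ∈ (Finset.univ : Finset (Fin n))) => hk k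
    rw [Finset.sum_add_distrib, Finset.sum_add_distrib, ← Finset.sum_div, ← Finset.sum_div,
      ← Finset.sum_div, sum_entropy_majHalf hn, Finset.sum_const, Finset.card_univ, Fintype.card_fin,
      nsmul_eq_mul] at h2
    rw [smse]
    linarith
  have hE : condSMSE (unif n) (majF n) = smse (majHalf n true) + smse (majHalf n false) := by
    rw [condSMSE, Fintype.sum_bool]
    rfl
  have hB : ∑ k, biasErr n k =
      (∑ k : Fin n, ∑ x, majHalf n true x * bias (majHalf n true) k x ^ 4) +
      ∑ k : Fin n, ∑ x, majHalf n false x * bias (majHalf n false) k x ^ 4 := by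
    simp only [biasErr, Fintype.sum_bool, Finset.sum_add_distrib]
  rw [hE, hB]
  linarith [hc true, hc false]

theorem stmt1 : ∀ ε : ℝ, 0 < ε → ∃ N : ℕ, ∀ n : ℕ, N ≤ n → Odd n →
    condSMSE (unif n) (majF n) ≤ ((n : ℝ) - 2 * Real.log 2) / 4 + ε := by
  intro ε hε
  obtain ⟨T, hT⟩ := Filter.eventually_atTop.1 (tendsto_tsum_min.eventually (gt_mem_nhds hε))
  refine ⟨2 * T + 1, fun n hn hodd => ?_⟩
  have h1 := condSMSE_majF_le hodd
  obtain ⟨t, rfl⟩ := hodd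
  have h2 := sum_biasErr_le t
  have h3 := hT t (by omega)
  linarith
end

section
/- For every fixed α ∈ [0,1/2], the noisy SMSE of majority satisfies: limsup over odd n → ∞ of [M(Y^n | maj(X^n)) − (n − 2 ln 2 · (1 − 2α)^2 · (1 − μ(α)))/4] ≤ 0, i.e., M(Y^n | maj(X^n)) ≤ (n − 2 ln 2 · (1 − 2α)^2 · (1 − μ(α)))/4 + o(1). -/
/-!
Write `ρ = 1 - 2α` and let `g y = P[maj X = 1 | Y = y]`, the noise operator applied to the indicator
of majority. Revealing the bits of `Y` one at a time turns `g` into a martingale `p_k` with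
symmetric steps `p_{k+1} = p_k ± d_k`.

*From squared error to entropy.* The SMSE lost at step `k` because of the side information is
`𝔼[d² / (4 * p) + d² / (4 * (1 - p))]`, which is, up to fourth order in `d`, half of the expected drop of
the entropy of `p` (in nats). The singularities of the entropy at `0` and `1` are removed by shifting
both masses by `η > 0` (`entS`); telescoping gives `smse_le`:
`M ≤ n/4 - (entS η (𝔼 g) - 𝔼 entS η (g)) / 2 + (3η³)⁻¹ ∑ 𝔼 d_k⁴`.

*The error term vanishes.* `g` is symmetric and monotone, so `d_k ≥ 0` and Bessel's inequality gives
`d_k² ≤ 1 / (n - k)` and `𝔼 d_k ≤ 1 / √n`; hence `∑ 𝔼 d_k⁴ ≤ (1 + log n) / √n` (`sum_incr_le`).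

*The main term.* For `n` odd, `𝔼 g = 1/2`. By concavity and symmetry of `entS η`, `𝔼 entS η (g)` is
at most `entS η` at the error probability of guessing `maj X` by `maj Y`, namely
`(1 - Stab_ρ(maj)) / 2` (`avg_entS_noise_le`). The inequality `Stab_ρ(maj) ≥ (2/π) arcsin ρ`
(`arcsin_le_stab`) bounds this by `arccos ρ / π`. To prove it, the Fourier weights `W_k` of majority
satisfy `k² W_k ≤ (k+1)(k+2) W_{k+2}` (`wt_growth`), with equality for the Taylor coefficients of
the arcsine, `W_1 ≥ 2/π` by Wallis' product (`wt_one`), and `∑ W_k = 1`; if `P = ∑ W_k t^k`, then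
`√(1 - t²) P'(t)` has a derivative whose sign changes at most once, from positive to negative, so
`P - (2/π) arcsin`, nonnegative at `0` and zero at `1`, is nonnegative on `[0, 1]`
(`arcsin_le_poly`).

As `η → 0` the main term becomes `n/4 - (log 2)(1 - μ(α)) / 2`, which is at most the claimed
`n/4 - (log 2)(1 - 2α)² (1 - μ(α)) / 2`; so `η` is chosen first and then `n`.
-/

open Finset MeasureTheory

/-! ### Averages over the cube -/

/-- The sign `±1` of a bit. -/
def chi (b : Bool) : ℝ := if b then 1 else -1

/-- The average of a function over the discrete cube. -/
noncomputable def avg {n : ℕ} (G : (Fin n → Bool) → ℝ) : ℝ := ((2 : ℝ) ^ n)⁻¹ * ∑ x, G x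

/-- `x` with its `k`-th bit flipped. -/
def flipAt {n : ℕ} (k : Fin n) (x : Fin n → Bool) : Fin n → Bool :=
  Function.update x k (!x k)

/-- The first `k` bits of `x` followed by the remaining bits of `z`. -/
def mix {n : ℕ} (k : ℕ) (x z : Fin n → Bool) : Fin n → Bool :=
  fun i => if i.val < k then x i else z i

/-- The conditional expectation of `G` given that the first `k` bits are those of `x`. -/
noncomputable def cavg {n : ℕ} (k : ℕ) (x : Fin n → Bool) (G : (Fin n → Bool) → ℝ) : ℝ :=
  avg (fun z => G (mix k x z))

theorem chi_mul_self (b : Bool) : chi b * chi b = 1 := by cases b <;> simp [chi]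

theorem chi_not (b : Bool) : chi (!b) = -chi b := by cases b <;> simp [chi]

theorem chi_eq (b : Bool) : chi b = 1 ∨ chi b = -1 := by cases b <;> simp [chi]

section
variable {n : ℕ}

theorem flipAt_self (k : Fin n) (x : Fin n → Bool) : flipAt k x k = !x k := by simp [flipAt]

theorem flipAt_ne {k i : Fin n} (h : i ≠ k) (x : Fin n → Bool) : flipAt k x i = x i := by
  simp [flipAt, h]

theorem flipAt_flipAt (k : Fin n) (x : Fin n → Bool) : flipAt k (flipAt k x) = x := by
  ext i
  by_cases h : i = k
  · subst h; simp [flipAt_self]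
  · simp [flipAt_ne h]

theorem sum_flip (k : Fin n) (G : (Fin n → Bool) → ℝ) : ∑ x, G (flipAt k x) = ∑ x, G x :=
  Fintype.sum_equiv (Function.Involutive.toPerm _ (flipAt_flipAt k)) _ _ (fun _ => rfl)

theorem avg_flip (k : Fin n) (G : (Fin n → Bool) → ℝ) :
    avg (fun x => G (flipAt k x)) = avg G := by
  simp only [avg, sum_flip k G]

theorem avg_add (F G : (Fin n → Bool) → ℝ) : avg (fun x => F x + G x) = avg F + avg G := by
  simp only [avg, sum_add_distrib, mul_add]

theorem avg_sub (F G : (Fin n → Bool) → ℝ) : avg (fun x => F x - G x) = avg F - avg G := by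
  simp only [avg, sum_sub_distrib, mul_sub]

theorem avg_smul (c : ℝ) (G : (Fin n → Bool) → ℝ) : avg (fun x => c * G x) = c * avg G := by
  simp only [avg, ← mul_sum]; ring

theorem avg_neg (G : (Fin n → Bool) → ℝ) : avg (fun x => -G x) = -avg G := by
  simp only [avg, sum_neg_distrib]; ring

theorem avg_const (c : ℝ) : avg (fun _ : Fin n → Bool => c) = c := by
  simp [avg]

theorem avg_mono {F G : (Fin n → Bool) → ℝ} (h : ∀ x, F x ≤ G x) : avg F ≤ avg G := by
  unfold avg
  gcongr with x
  exact h x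

theorem avg_nonneg {G : (Fin n → Bool) → ℝ} (h : ∀ x, 0 ≤ G x) : 0 ≤ avg G := by
  have := avg_mono h
  rwa [avg_const] at this

theorem avg_sum {ι : Type*} (s : Finset ι) (G : ι → (Fin n → Bool) → ℝ) :
    avg (fun x => ∑ i ∈ s, G i x) = ∑ i ∈ s, avg (G i) := by
  simp only [avg, mul_sum]
  exact sum_comm

/-- A function that is odd in the `k`-th bit has mean zero. -/
theorem avg_eq_zero_of_flip (k : Fin n) {G : (Fin n → Bool) → ℝ}
    (h : ∀ x, G (flipAt k x) = -G x) : avg G = 0 := by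
  have h1 := avg_flip k G
  simp only [h, avg_neg] at h1
  linarith

/-- Pairing each point with its flip in the `k`-th bit reduces nonnegativity of a mean to
nonnegativity of the pair sums. -/
theorem avg_nonneg_of_flip (k : Fin n) {G : (Fin n → Bool) → ℝ}
    (h : ∀ x, 0 ≤ G x + G (flipAt k x)) : 0 ≤ avg G := by
  have h1 := avg_flip k G
  have h2 := avg_nonneg h
  rw [avg_add] at h2
  linarith

/-- Swapping the tails of two independent uniform points is a bijection of the pair. -/
theorem avg_mix (k : ℕ) (G : (Fin n → Bool) → ℝ) :
    avg (fun x => avg (fun z => G (mix k x z))) = avg G := by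
  have inv : Function.Involutive
      (fun p : (Fin n → Bool) × (Fin n → Bool) => (mix k p.1 p.2, mix k p.2 p.1)) := by
    intro p
    ext i <;> simp only [mix] <;> split_ifs <;> rfl
  have h : ∑ p : (Fin n → Bool) × (Fin n → Bool), G (mix k p.1 p.2)
      = ∑ p : (Fin n → Bool) × (Fin n → Bool), G p.1 :=
    Fintype.sum_equiv (inv.toPerm _) _ _ (fun _ => rfl)
  rw [Fintype.sum_prod_type, Fintype.sum_prod_type] at h
  simp only [avg, ← mul_sum]
  rw [h]
  simp [← mul_sum]

theorem mix_mix_left (k : ℕ) (x z w : Fin n → Bool) : mix k (mix k x z) w = mix k x w := by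
  ext i; simp only [mix]; split_ifs <;> rfl

theorem mix_zero (x z : Fin n → Bool) : mix 0 x z = z := by
  ext i; simp [mix]

theorem mix_all (x z : Fin n → Bool) : mix n x z = x := by
  ext i; simp [mix]

theorem cavg_mix (k : ℕ) (x z : Fin n → Bool) (G : (Fin n → Bool) → ℝ) :
    cavg k (mix k x z) G = cavg k x G := by
  simp only [cavg, mix_mix_left]

theorem cavg_zero (x : Fin n → Bool) (G : (Fin n → Bool) → ℝ) : cavg 0 x G = avg G := by
  simp only [cavg, mix_zero]

theorem cavg_all (x : Fin n → Bool) (G : (Fin n → Bool) → ℝ) : cavg n x G = G x := by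
  simp only [cavg, mix_all, avg_const]

/-- Tower property: a factor `P` depending only on the first `k` bits may be pulled out of the
conditional expectation. -/
theorem avg_mul_cavg (k : ℕ) (G P : (Fin n → Bool) → ℝ)
    (hP : ∀ x z, P (mix k x z) = P x) :
    avg (fun x => G x * P x) = avg (fun x => cavg k x G * P x) := by
  rw [← avg_mix k]
  congr 1; ext x
  simp only [hP, cavg]
  rw [mul_comm, ← avg_smul]
  congr 1; ext z; ring

theorem avg_cavg (k : ℕ) (G : (Fin n → Bool) → ℝ) : avg (fun x => cavg k x G) = avg G :=
  avg_mix k G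

theorem mix_flip {k : ℕ} {j : Fin n} (hj : k ≤ j.val) (x z : Fin n → Bool) :
    mix k x (flipAt j z) = flipAt j (mix k x z) := by
  ext i
  by_cases h : i = j
  · subst h; simp [mix, flipAt_self, not_lt.mpr hj]
  · simp [mix, flipAt_ne h]

theorem mix_flip_left {k : ℕ} {j : Fin n} (hj : k ≤ j.val) (x z : Fin n → Bool) :
    mix k (flipAt j x) z = mix k x z := by
  ext i
  by_cases h : i = j
  · subst h; simp [mix, not_lt.mpr hj]
  · simp [mix, flipAt_ne h]

theorem cavg_flip {k : ℕ} {j : Fin n} (hj : k ≤ j.val) (x : Fin n → Bool)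
    (G : (Fin n → Bool) → ℝ) : cavg k (flipAt j x) G = cavg k x G := by
  simp only [cavg, mix_flip_left hj]

theorem mix_at {k : ℕ} {j : Fin n} (hj : k ≤ j.val) (x z : Fin n → Bool) :
    mix k x z j = z j := by
  simp [mix, not_lt.mpr hj]

/-- Sums over a cylinder are proportional to conditional expectations; the constant of
proportionality does not depend on `G`, so it cancels in `condQ`. -/
theorem cyl_sum (k : ℕ) (x : Fin n → Bool) (G : (Fin n → Bool) → ℝ) :
    ∑ y ∈ univ.filter (fun y : Fin n → Bool => ∀ i : Fin n, i.val < k → y i = x i), G y =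
      (#(univ.filter (fun y : Fin n → Bool => ∀ i : Fin n, i.val < k → y i = x i)) : ℝ)
        * cavg k x G := by
  classical
  have key := avg_mix k (fun y => if ∀ i : Fin n, i.val < k → y i = x i then G y else 0)
  have e : ∀ u z : Fin n → Bool,
      (if ∀ i : Fin n, i.val < k → mix k u z i = x i then G (mix k u z) else 0) =
      if ∀ i : Fin n, i.val < k → u i = x i then G (mix k x z) else 0 := by
    intro u z
    have h1 : (∀ i : Fin n, i.val < k → mix k u z i = x i) ↔
        (∀ i : Fin n, i.val < k → u i = x i) := by
      refine forall_congr' fun i => ?_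
      refine imp_congr_right fun hi => ?_
      simp [mix, hi]
    simp only [h1]
    split_ifs with h
    · congr 1
      ext i
      simp only [mix]
      split_ifs with hi
      · rw [h i hi]
      · rfl
    · rfl
  simp only [e] at key
  have e2 : ∀ u : Fin n → Bool,
      avg (fun z => if ∀ i : Fin n, i.val < k → u i = x i then G (mix k x z) else 0) =
      if ∀ i : Fin n, i.val < k → u i = x i then cavg k x G else 0 := by
    intro u
    split_ifs
    · rfl
    · exact avg_const 0
  simp only [e2] at key
  simp only [avg] at key
  have h2 : ((2 : ℝ) ^ n)⁻¹ ≠ 0 := by positivity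
  have key := mul_left_cancel₀ h2 key
  rw [← sum_filter, ← sum_filter, sum_const, nsmul_eq_mul] at key
  exact key.symm

end

/-! ### The prefix martingale and the entropy inequality for one step -/

section
variable {n : ℕ}

theorem cavg_add (k : ℕ) (x : Fin n → Bool) (F G : (Fin n → Bool) → ℝ) :
    cavg k x (fun y => F y + G y) = cavg k x F + cavg k x G := avg_add _ _

theorem cavg_sub (k : ℕ) (x : Fin n → Bool) (F G : (Fin n → Bool) → ℝ) :
    cavg k x (fun y => F y - G y) = cavg k x F - cavg k x G := avg_sub _ _

theorem cavg_smul (k : ℕ) (x : Fin n → Bool) (c : ℝ) (G : (Fin n → Bool) → ℝ) :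
    cavg k x (fun y => c * G y) = c * cavg k x G := avg_smul _ _

theorem cavg_const (k : ℕ) (x : Fin n → Bool) (c : ℝ) :
    cavg k x (fun _ => c) = c := avg_const _

theorem cavg_mono (k : ℕ) (x : Fin n → Bool) {F G : (Fin n → Bool) → ℝ} (h : ∀ y, F y ≤ G y) :
    cavg k x F ≤ cavg k x G := avg_mono fun _ => h _

/-- The increment of the prefix martingale of `g` when the `k`-th bit is revealed to be `1`. -/
noncomputable def incr (g : (Fin n → Bool) → ℝ) (k : Fin n) (x : Fin n → Bool) : ℝ :=
  cavg k.val x (fun y => chi (y k) * g y)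

theorem cavg_chi (k : Fin n) (x : Fin n → Bool) : cavg k.val x (fun y => chi (y k)) = 0 := by
  refine avg_eq_zero_of_flip k fun z => ?_
  simp only [mix_at le_rfl, flipAt_self, chi_not]

theorem cavg_succ (g : (Fin n → Bool) → ℝ) (k : Fin n) (x : Fin n → Bool) :
    cavg (k.val + 1) x g = cavg k.val x g + chi (x k) * incr g k x := by
  have hz : avg (fun z => chi (z k) * g (mix (k.val + 1) x z)) = 0 := by
    refine avg_eq_zero_of_flip k fun z => ?_
    have : mix (k.val + 1) x (flipAt k z) = mix (k.val + 1) x z := by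
      ext i
      by_cases h : i = k
      · subst h; simp [mix]
      · simp [mix, flipAt_ne h]
    rw [this, flipAt_self, chi_not]; ring
  have h1 : ∀ z : Fin n → Bool,
      g (mix k.val x z) + chi (x k) * (chi (z k) * g (mix k.val x z)) =
      g (mix (k.val + 1) x z) + chi (x k) * (chi (z k) * g (mix (k.val + 1) x z)) := by
    intro z
    by_cases h : z k = x k
    · have : mix (k.val + 1) x z = mix k.val x z := by
        ext i
        by_cases hi : i = k
        · subst hi; simp [mix, h]
        · have : i.val ≠ k.val := fun h => hi (Fin.ext h)
          have h3 : i.val < k.val + 1 ↔ i.val < k.val := by omega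
          simp [mix, h3]
      rw [this]
    · have : chi (x k) * chi (z k) = -1 := by
        revert h; cases z k <;> cases x k <;> simp [chi]
      rw [← mul_assoc, ← mul_assoc, this]; ring
  have h2 : cavg k.val x g + chi (x k) * incr g k x =
      avg (fun z => g (mix k.val x z) + chi (x k) * (chi (z k) * g (mix k.val x z))) := by
    rw [avg_add, avg_smul]
    simp only [incr, cavg, mix_at le_rfl]
  rw [h2]
  simp only [h1]
  rw [avg_add, avg_smul, hz, cavg]; ring

theorem incr_flip (g : (Fin n → Bool) → ℝ) (k : Fin n) (x : Fin n → Bool) :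
    incr g k (flipAt k x) = incr g k x := cavg_flip le_rfl _ _

theorem incr_mix (g : (Fin n → Bool) → ℝ) (k : Fin n) (x z : Fin n → Bool) :
    incr g k (mix k.val x z) = incr g k x := cavg_mix _ _ _ _

/-- Given the first `k` bits, the next martingale value is `p + d` or `p - d` with
probability `1/2` each. -/
theorem avg_step (g : (Fin n → Bool) → ℝ) (k : Fin n) (F : ℝ → ℝ) :
    avg (fun x => F (cavg (k.val + 1) x g)) =
      avg (fun x => (F (cavg k.val x g + incr g k x) + F (cavg k.val x g - incr g k x)) / 2) := by
  have h1 := avg_flip k (fun x => F (cavg (k.val + 1) x g))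
  have h2 : ∀ x, (F (cavg k.val x g + incr g k x) + F (cavg k.val x g - incr g k x)) / 2 =
      (1 / 2) * (F (cavg (k.val + 1) x g) + F (cavg (k.val + 1) (flipAt k x) g)) := by
    intro x
    rw [cavg_succ, cavg_succ, cavg_flip le_rfl, incr_flip, flipAt_self, chi_not]
    rcases chi_eq (x k) with h | h <;> · rw [h]; ring_nf
  simp only [h2]
  rw [avg_smul, avg_add, h1]; ring

theorem incr_bounds {g : (Fin n → Bool) → ℝ} (h0 : ∀ x, 0 ≤ g x) (k : Fin n)
    (x : Fin n → Bool) : |incr g k x| ≤ cavg k.val x g := by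
  rw [abs_le]
  constructor
  · rw [← neg_one_mul, ← cavg_smul]
    refine cavg_mono _ _ fun y => ?_
    have := h0 y
    rcases chi_eq (y k) with h | h <;> rw [h] <;> linarith
  · refine cavg_mono _ _ fun y => ?_
    have := h0 y
    rcases chi_eq (y k) with h | h <;> rw [h] <;> linarith

theorem incr_one_sub (g : (Fin n → Bool) → ℝ) (k : Fin n) (x : Fin n → Bool) :
    incr (fun y => 1 - g y) k x = -incr g k x := by
  have : ∀ y : Fin n → Bool, chi (y k) * (1 - g y) = chi (y k) - chi (y k) * g y :=
    fun y => by ring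
  simp only [incr, this]
  rw [cavg_sub, cavg_chi]; ring

/-- If `p` is the posterior given the prefix and `d` the increment, the posterior of the next bit
being `1` is `(p + d) / (2 * p)`. -/
theorem condQ_eq (g : (Fin n → Bool) → ℝ) (k : Fin n) (x : Fin n → Bool) :
    condQ (fun y => ((2 : ℝ) ^ n)⁻¹ * g y) k x =
      (cavg k.val x g + incr g k x) / 2 / cavg k.val x g := by
  classical
  have hnum : ∑ y ∈ univ.filter
      (fun y : Fin n → Bool => (∀ i : Fin n, i < k → y i = x i) ∧ y k = true),
        ((2 : ℝ) ^ n)⁻¹ * g y =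
      ∑ y ∈ univ.filter (fun y : Fin n → Bool => ∀ i : Fin n, i.val < k.val → y i = x i),
        ((2 : ℝ) ^ n)⁻¹ * ((1 / 2) * (g y + chi (y k) * g y)) := by
    rw [← filter_filter, sum_filter]
    simp only [Fin.lt_def]
    refine sum_congr rfl fun y _ => ?_
    cases y k
    · simp [chi]
    · simp [chi]; ring
  have hden : ∑ y ∈ univ.filter (fun y : Fin n → Bool => ∀ i : Fin n, i < k → y i = x i),
        ((2 : ℝ) ^ n)⁻¹ * g y =
      ∑ y ∈ univ.filter (fun y : Fin n → Bool => ∀ i : Fin n, i.val < k.val → y i = x i),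
        ((2 : ℝ) ^ n)⁻¹ * g y := by
    simp only [Fin.lt_def]
  have hc : (#(univ.filter
      (fun y : Fin n → Bool => ∀ i : Fin n, i.val < k.val → y i = x i)) : ℝ) ≠ 0 := by
    rw [Nat.cast_ne_zero, card_ne_zero]
    exact ⟨x, by simp⟩
  have h2 : ((2 : ℝ) ^ n)⁻¹ ≠ 0 := by positivity
  rw [condQ, hnum, hden, cyl_sum, cyl_sum, cavg_smul, cavg_smul, cavg_smul, cavg_add,
    mul_div_mul_left _ _ hc, mul_div_mul_left _ _ h2, incr]
  ring

/-- The conditional variance of the next bit, weighted by the posterior `p`, is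
`p / 4 - d² / (4 * p)`; the shift by `η` only weakens the bound. When `p = 0` both sides vanish,
in agreement with the convention `x / 0 = 0`. -/
theorem loss_le {p d η : ℝ} (hd : |d| ≤ p) (hη : 0 < η) :
    p * ((p + d) / 2 / p * (1 - (p + d) / 2 / p)) ≤ p / 4 - d ^ 2 / (4 * (p + η)) := by
  rcases (le_trans (abs_nonneg d) hd).eq_or_lt with h | h
  · have : d = 0 := by
      rw [← h] at hd; exact abs_nonpos_iff.mp hd
    simp [← h, this]
  · have h1 : p * ((p + d) / 2 / p * (1 - (p + d) / 2 / p)) = p / 4 - d ^ 2 / (4 * p) := by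
      field_simp; ring
    rw [h1]
    gcongr
    linarith

/-- Third-order Taylor upper bound for `log (1 + t)`. -/
theorem log_one_add_le {t : ℝ} (ht : -1 < t) :
    Real.log (1 + t) ≤ t - t ^ 2 / 2 + t ^ 3 / 3 := by
  let h : ℝ → ℝ := fun t => t - t ^ 2 / 2 + t ^ 3 / 3 - Real.log (1 + t)
  have hd : ∀ s : ℝ, -1 < s → HasDerivAt h (s ^ 3 / (1 + s)) s := by
    intro s hs
    have hs' : (1 + s) ≠ 0 := by linarith
    have h1 : HasDerivAt (fun t : ℝ => Real.log (1 + t)) (1 / (1 + s)) s :=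
      ((hasDerivAt_id s).const_add 1).log hs'
    have h2 : HasDerivAt h _ s :=
      (((hasDerivAt_id' s).sub ((hasDerivAt_pow 2 s).div_const 2)).add
        ((hasDerivAt_pow 3 s).div_const 3)).sub h1
    refine h2.congr_deriv ?_
    norm_num
    field_simp
    ring
  have h0 : h 0 = 0 := by simp [h]
  suffices 0 ≤ h t by simp only [h] at this; linarith
  rcases lt_trichotomy t 0 with hlt | rfl | hgt
  · obtain ⟨c, hc, hc'⟩ := exists_hasDerivAt_eq_slope h (fun s => s ^ 3 / (1 + s)) hlt
      (fun s hs => (hd s (by linarith [hs.1])).continuousAt.continuousWithinAt)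
      (fun s hs => hd s (by linarith [hs.1]))
    have : c ^ 3 / (1 + c) ≤ 0 :=
      div_nonpos_of_nonpos_of_nonneg (by have := hc.2; nlinarith [sq_nonneg c])
        (by linarith [hc.1])
    rw [hc', h0, div_nonpos_iff] at this
    rcases this with h | h <;> linarith [h.1, h.2]
  · exact h0.ge
  · obtain ⟨c, hc, hc'⟩ := exists_hasDerivAt_eq_slope h (fun s => s ^ 3 / (1 + s)) hgt
      (fun s hs => (hd s (by linarith [hs.1])).continuousAt.continuousWithinAt)
      (fun s hs => hd s (by linarith [hs.1]))
    have : 0 ≤ c ^ 3 / (1 + c) := by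
      have := hc.1
      positivity
    rw [hc', h0, sub_zero, sub_zero, div_nonneg_iff] at this
    rcases this with h | h <;> linarith [h.1, h.2]

/-- The average entropy loss in a symmetric step of size `d` is `d² / (2 * u)` up to fourth order. -/
theorem negMulLog_step {u d : ℝ} (hd : |d| < u) :
    Real.negMulLog u - (Real.negMulLog (u + d) + Real.negMulLog (u - d)) / 2 ≤
      d ^ 2 / (2 * u) + d ^ 4 / (3 * u ^ 3) := by
  have hu : 0 < u := lt_of_le_of_lt (abs_nonneg d) hd
  have hdd := abs_lt.mp hd
  set t := d / u with ht
  have hdt : d = u * t := by rw [ht]; field_simp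
  have ht1 : -1 < t := by rw [ht, lt_div_iff₀ hu]; linarith
  have ht2 : t < 1 := by rw [ht, div_lt_iff₀ hu]; linarith
  have l1 : Real.log (u + d) = Real.log u + Real.log (1 + t) := by
    rw [← Real.log_mul hu.ne' (by linarith)]; congr 1; rw [hdt]; ring
  have l2 : Real.log (u - d) = Real.log u + Real.log (1 + -t) := by
    rw [← Real.log_mul hu.ne' (by linarith)]; congr 1; rw [hdt]; ring
  have b1 := mul_le_mul_of_nonneg_left (log_one_add_le ht1) (by linarith : 0 ≤ 1 + t)
  have b2 := mul_le_mul_of_nonneg_left (log_one_add_le (by linarith : -1 < -t))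
    (by linarith : 0 ≤ 1 - t)
  have e1 : Real.negMulLog u - (Real.negMulLog (u + d) + Real.negMulLog (u - d)) / 2 =
      u / 2 * ((1 + t) * Real.log (1 + t) + (1 - t) * Real.log (1 + -t)) := by
    simp only [Real.negMulLog]
    rw [l1, l2, hdt]; ring
  have e2 : d ^ 2 / (2 * u) + d ^ 4 / (3 * u ^ 3) = u / 2 * (t ^ 2 + 2 * t ^ 4 / 3) := by
    rw [hdt]; field_simp
  rw [e1, e2]
  refine mul_le_mul_of_nonneg_left ?_ (by linarith)
  nlinarith [b1, b2]

/-- The binary entropy (in nats) of `(p, 1 - p)` with both masses shifted by `η`; the shift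
makes its higher derivatives bounded on `[0, 1]`. -/
noncomputable def entS (η p : ℝ) : ℝ := Real.negMulLog (p + η) + Real.negMulLog (1 - p + η)

/-- The two quadratic terms are exactly twice the SMSE gains of `loss_le` at `p` and `1 - p`:
this is what links squared error to entropy. -/
theorem entS_step {η p d : ℝ} (hη : 0 < η) (h1 : |d| ≤ p) (h2 : |d| ≤ 1 - p) :
    entS η p - (entS η (p + d) + entS η (p - d)) / 2 ≤
      2 * (d ^ 2 / (4 * (p + η)) + d ^ 2 / (4 * (1 - p + η))) + 2 / (3 * η ^ 3) * d ^ 4 := by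
  have hp : 0 ≤ p := le_trans (abs_nonneg d) h1
  have hp' : 0 ≤ 1 - p := le_trans (abs_nonneg d) h2
  have a := negMulLog_step (u := p + η) (d := d) (by linarith)
  have b := negMulLog_step (u := 1 - p + η) (d := d) (by linarith)
  have c1 : d ^ 4 / (3 * (p + η) ^ 3) ≤ d ^ 4 / (3 * η ^ 3) := by gcongr; linarith
  have c2 : d ^ 4 / (3 * (1 - p + η) ^ 3) ≤ d ^ 4 / (3 * η ^ 3) := by gcongr; linarith
  have e1 : d ^ 2 / (2 * (p + η)) = 2 * (d ^ 2 / (4 * (p + η))) := by field_simp; ring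
  have e2 : d ^ 2 / (2 * (1 - p + η)) = 2 * (d ^ 2 / (4 * (1 - p + η))) := by field_simp; ring
  have e3 : 2 / (3 * η ^ 3) * d ^ 4 = d ^ 4 / (3 * η ^ 3) + d ^ 4 / (3 * η ^ 3) := by ring
  have e4 : 1 - (p + d) + η = 1 - p + η - d := by ring
  have e5 : 1 - (p - d) + η = 1 - p + η + d := by ring
  have e6 : p + d + η = p + η + d := by ring
  have e7 : p - d + η = p + η - d := by ring
  unfold entS
  rw [e3, e4, e5, e6, e7]
  linarith

theorem smseTerm_eq (g : (Fin n → Bool) → ℝ) (k : Fin n) :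
    smseTerm (fun y => ((2 : ℝ) ^ n)⁻¹ * g y) k =
      avg (fun x => cavg k.val x g * ((cavg k.val x g + incr g k x) / 2 / cavg k.val x g *
        (1 - (cavg k.val x g + incr g k x) / 2 / cavg k.val x g))) := by
  rw [← avg_mul_cavg k.val g]
  · simp only [smseTerm, condQ_eq, avg, mul_sum, mul_assoc]
  · intro x z
    simp only [cavg_mix, incr_mix]

/-- The SMSE given one bit with posterior `g = P[b = 1 | Y = ·]` is at most `n/4` minus half the
information about `b`, measured by `entS η`, up to the fourth moments of the increments. -/
theorem smse_le (g : (Fin n → Bool) → ℝ) (h0 : ∀ x, 0 ≤ g x) (h1 : ∀ x, g x ≤ 1)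
    {η : ℝ} (hη : 0 < η) :
    smse (fun y => ((2 : ℝ) ^ n)⁻¹ * g y) + smse (fun y => ((2 : ℝ) ^ n)⁻¹ * (1 - g y)) ≤
      n / 4 - (entS η (avg g) - avg (fun x => entS η (g x))) / 2 +
        1 / (3 * η ^ 3) * ∑ k : Fin n, avg (fun x => incr g k x ^ 4) := by
  have step : ∀ k : Fin n,
      smseTerm (fun y => ((2 : ℝ) ^ n)⁻¹ * g y) k +
        smseTerm (fun y => ((2 : ℝ) ^ n)⁻¹ * (1 - g y)) k ≤
      1 / 4 - (avg (fun x => entS η (cavg k.val x g)) -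
        avg (fun x => entS η (cavg (k.val + 1) x g))) / 2 +
        1 / (3 * η ^ 3) * avg (fun x => incr g k x ^ 4) := by
    intro k
    have e : 1 / 4 - (avg (fun x => entS η (cavg k.val x g)) -
        avg (fun x => entS η (cavg (k.val + 1) x g))) / 2 +
        1 / (3 * η ^ 3) * avg (fun x => incr g k x ^ 4) =
      avg (fun x => 1 / 4 - (1 / 2) * (entS η (cavg k.val x g) -
        (entS η (cavg k.val x g + incr g k x) + entS η (cavg k.val x g - incr g k x)) / 2) +
        1 / (3 * η ^ 3) * incr g k x ^ 4) := by
      rw [avg_step, avg_add, avg_sub, avg_const, avg_smul, avg_sub, avg_smul]; ring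
    rw [e, smseTerm_eq, smseTerm_eq, ← avg_add]
    refine avg_mono fun x => ?_
    have hp : cavg k.val x (fun y => 1 - g y) = 1 - cavg k.val x g := by
      rw [cavg_sub, cavg_const]
    have a1 := incr_bounds h0 k x
    have a2 := incr_bounds (g := fun y => 1 - g y) (fun y => by linarith [h1 y]) k x
    have b1 := loss_le a1 hη
    have b2 := loss_le a2 hη
    have b3 := entS_step hη a1 (by rwa [hp, incr_one_sub, abs_neg] at a2)
    rw [hp, incr_one_sub, neg_sq] at b2
    rw [hp, incr_one_sub]
    have e3 : 2 / (3 * η ^ 3) * incr g k x ^ 4 = 2 * (1 / (3 * η ^ 3) * incr g k x ^ 4) := by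
      ring
    rw [e3] at b3
    linarith
  have tel : ∑ k : Fin n, (avg (fun x => entS η (cavg k.val x g)) -
        avg (fun x => entS η (cavg (k.val + 1) x g))) =
      entS η (avg g) - avg (fun x => entS η (g x)) := by
    rw [Fin.sum_univ_eq_sum_range (fun k => avg (fun x => entS η (cavg k x g)) -
        avg (fun x => entS η (cavg (k + 1) x g))) n,
      sum_range_sub' (fun k => avg (fun x => entS η (cavg k x g)))]
    simp only [cavg_zero, cavg_all, avg_const]
  unfold smse
  rw [← sum_add_distrib]
  refine (sum_le_sum fun k _ => step k).trans (le_of_eq ?_)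
  rw [sum_add_distrib, sum_sub_distrib, ← sum_div, ← sum_div, tel, ← mul_sum]
  simp

end

/-! ### Size of the increments for symmetric monotone functions -/

section
variable {n : ℕ}

theorem mix_swap {k : ℕ} {i j : Fin n} (hi : k ≤ i.val) (hj : k ≤ j.val) (x z : Fin n → Bool) :
    mix k x (z ∘ Equiv.swap i j) = mix k x z ∘ Equiv.swap i j := by
  ext l
  by_cases h1 : l = i
  · subst h1
    simp [mix, not_lt.mpr hi, not_lt.mpr hj]
  · by_cases h2 : l = j
    · subst h2
      simp [mix, not_lt.mpr hi, not_lt.mpr hj]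
    · simp [mix, Equiv.swap_apply_of_ne_of_ne h1 h2]

theorem sum_perm (σ : Equiv.Perm (Fin n)) (G : (Fin n → Bool) → ℝ) :
    ∑ x : Fin n → Bool, G (x ∘ σ) = ∑ x, G x :=
  Fintype.sum_equiv (Equiv.arrowCongr σ.symm (Equiv.refl Bool)) _ _ (fun _ => rfl)

theorem avg_perm (σ : Equiv.Perm (Fin n)) (G : (Fin n → Bool) → ℝ) :
    avg (fun x => G (x ∘ σ)) = avg G := by
  simp only [avg, sum_perm σ G]

theorem cavg_chi_symm {g : (Fin n → Bool) → ℝ}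
    (hs : ∀ (σ : Equiv.Perm (Fin n)) x, g (x ∘ σ) = g x) {k : ℕ} {i j : Fin n}
    (hi : k ≤ i.val) (hj : k ≤ j.val) (x : Fin n → Bool) :
    cavg k x (fun y => chi (y i) * g y) = cavg k x (fun y => chi (y j) * g y) := by
  unfold cavg
  rw [← avg_perm (Equiv.swap i j)]
  simp only [mix_swap hi hj, hs, Function.comp, Equiv.swap_apply_left]

theorem avg_chi_chi (i j : Fin n) :
    avg (fun z : Fin n → Bool => chi (z i) * chi (z j)) = if i = j then 1 else 0 := by
  split_ifs with h
  · subst h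
    simp only [chi_mul_self, avg_const]
  · refine avg_eq_zero_of_flip i fun z => ?_
    rw [flipAt_self, flipAt_ne (Ne.symm h), chi_not]; ring

/-- Bessel's inequality: conditionally on the first `k` bits, a symmetric function has the same
correlation with each of the remaining `n - k` orthonormal bits. -/
theorem bessel {g : (Fin n → Bool) → ℝ} (h0 : ∀ x, 0 ≤ g x) (h1 : ∀ x, g x ≤ 1)
    (hs : ∀ (σ : Equiv.Perm (Fin n)) x, g (x ∘ σ) = g x) (k : Fin n) (x : Fin n → Bool) :
    ((n : ℝ) - k) * incr g k x ^ 2 ≤ 1 := by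
  set c := incr g k x with hc
  set J : Finset (Fin n) := univ.filter (fun j => k.val ≤ j.val) with hJ
  have hcard : (#J : ℝ) = n - k := by
    have : J = Finset.Ici k := by ext j; simp only [hJ, mem_filter, mem_univ, true_and, mem_Ici, Fin.le_def]
    rw [this, Fin.card_Ici, Nat.cast_sub k.isLt.le]
  have hcj : ∀ j ∈ J, avg (fun z => chi (z j) * g (mix k.val x z)) = c := by
    intro j hj
    have hj' : k.val ≤ j.val := by simpa [hJ] using hj
    rw [hc, incr, ← cavg_chi_symm hs hj' le_rfl]
    simp only [cavg, mix_at hj']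
  have hpos := avg_nonneg (G := fun z : Fin n → Bool =>
    (g (mix k.val x z) - c * ∑ j ∈ J, chi (z j)) ^ 2) (fun z => sq_nonneg _)
  have hexp : ∀ z : Fin n → Bool, (g (mix k.val x z) - c * ∑ j ∈ J, chi (z j)) ^ 2 =
      g (mix k.val x z) ^ 2 - 2 * c * ∑ j ∈ J, chi (z j) * g (mix k.val x z) +
        c ^ 2 * ∑ i ∈ J, ∑ j ∈ J, chi (z i) * chi (z j) := by
    intro z
    rw [← sum_mul_sum, ← sum_mul]; ring
  simp only [hexp] at hpos
  rw [avg_add, avg_sub, avg_smul, avg_smul, avg_sum, avg_sum, sum_congr rfl hcj] at hpos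
  have h3 : ∑ i ∈ J, avg (fun z : Fin n → Bool => ∑ j ∈ J, chi (z i) * chi (z j)) = #J := by
    simp only [avg_sum, avg_chi_chi]
    rw [sum_congr rfl (fun i hi => by rw [sum_ite_eq, if_pos hi])]
    simp
  have h4 : avg (fun z => g (mix k.val x z) ^ 2) ≤ 1 := by
    rw [← avg_const (n := n) 1]
    refine avg_mono fun z => ?_
    have := h0 (mix k.val x z); have := h1 (mix k.val x z)
    nlinarith
  rw [h3, sum_const, nsmul_eq_mul, hcard] at hpos
  nlinarith

/-- The increments of a monotone function are nonnegative. -/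
theorem incr_nonneg {g : (Fin n → Bool) → ℝ}
    (hm : ∀ k x, 0 ≤ chi (x k) * (g x - g (flipAt k x))) (k : Fin n) (x : Fin n → Bool) :
    0 ≤ incr g k x := by
  refine avg_nonneg_of_flip k fun z => ?_
  simp only [mix_flip (le_refl k.val), flipAt_self, chi_not]
  linarith [hm k (mix k.val x z)]

/-- The sum of the fourth moments of the increments is `O(log n / √n)`: `d_k² ≤ 1 / (n - k)`
pointwise by `bessel`, while `d_k ≥ 0` has mean equal to the common degree-one coefficient,
which is at most `1 / √n`. -/
theorem sum_incr_le {g : (Fin n → Bool) → ℝ} (h0 : ∀ x, 0 ≤ g x) (h1 : ∀ x, g x ≤ 1)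
    (hs : ∀ (σ : Equiv.Perm (Fin n)) x, g (x ∘ σ) = g x)
    (hm : ∀ k x, 0 ≤ chi (x k) * (g x - g (flipAt k x))) :
    ∑ k : Fin n, avg (fun x => incr g k x ^ 4) ≤ (1 + Real.log n) / √n := by
  have hmean : ∀ k : Fin n, avg (fun x => incr g k x) ≤ 1 / √n := by
    intro k
    have hn : 0 < n := k.pos
    let z0 : Fin n := ⟨0, hn⟩
    have e : avg (fun x => incr g k x) = incr g z0 (fun _ => true) := by
      unfold incr
      rw [avg_cavg, ← cavg_zero (fun _ => true)]
      exact cavg_chi_symm hs (Nat.zero_le _) (Nat.zero_le _) _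
    rw [e]
    have b := bessel h0 h1 hs z0 (fun _ => true)
    have hn' : (0 : ℝ) < n := by exact_mod_cast hn
    rw [← Real.sqrt_one, ← Real.sqrt_div zero_le_one]
    refine Real.le_sqrt_of_sq_le ?_
    rw [le_div_iff₀ hn']
    simp only [z0, Nat.cast_zero, sub_zero] at b
    linarith
  have hterm : ∀ k : Fin n, avg (fun x => incr g k x ^ 4) ≤ 1 / √n * (1 / ((n : ℝ) - k)) := by
    intro k
    have hk : (0 : ℝ) < (n : ℝ) - k := by
      rw [sub_pos]; exact_mod_cast k.isLt
    have p : ∀ x, incr g k x ^ 4 ≤ 1 / ((n : ℝ) - k) * incr g k x := by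
      intro x
      have a0 := incr_nonneg hm k x
      have a1 : incr g k x ≤ 1 := by
        refine (le_abs_self _).trans ((incr_bounds h0 k x).trans ?_)
        rw [← cavg_const k.val x 1]
        exact cavg_mono _ _ h1
      have a2 : incr g k x ^ 2 ≤ 1 / ((n : ℝ) - k) := by
        rw [le_div_iff₀ hk]; linarith [bessel h0 h1 hs k x]
      calc incr g k x ^ 4 = incr g k x ^ 2 * (incr g k x * incr g k x) := by ring
        _ ≤ 1 / ((n : ℝ) - k) * (incr g k x * 1) := by gcongr
        _ = _ := by ring
    refine (avg_mono p).trans ?_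
    rw [avg_smul, mul_comm]
    exact mul_le_mul_of_nonneg_right (hmean k) (by positivity)
  refine (sum_le_sum fun k _ => hterm k).trans ?_
  rw [← mul_sum, div_eq_mul_one_div (1 + Real.log (n : ℝ)), mul_comm (1 / √(n : ℝ))]
  have hs0 : 0 ≤ 1 / √(n : ℝ) := by positivity
  refine mul_le_mul_of_nonneg_right ?_ hs0
  rw [Fin.sum_univ_eq_sum_range (fun k => 1 / ((n : ℝ) - k)) n]
  refine le_trans (le_of_eq ?_) (harmonic_le_one_add_log n)
  rw [harmonic, ← sum_range_reflect]
  push_cast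
  refine sum_congr rfl fun k hk => ?_
  have : k < n := mem_range.mp hk
  rw [one_div]
  congr 1
  rw [Nat.sub_sub, Nat.cast_sub (by omega)]
  push_cast; ring

end

/-! ### The noise kernel -/

section
variable {n : ℕ}

/-- The transition kernel of the binary symmetric channel with correlation `ρ = 1 - 2α`. -/
noncomputable def kern (ρ : ℝ) (y x : Fin n → Bool) : ℝ :=
  ∏ i, (1 + ρ * (chi (y i) * chi (x i))) / 2

theorem kern_nonneg {ρ : ℝ} (h0 : 0 ≤ ρ) (h1 : ρ ≤ 1) (y x : Fin n → Bool) :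
    0 ≤ kern ρ y x := by
  refine prod_nonneg fun i _ => ?_
  rcases chi_eq (y i) with h | h <;> rcases chi_eq (x i) with h' | h' <;> rw [h, h'] <;> linarith

theorem kern_comm (ρ : ℝ) (y x : Fin n → Bool) : kern ρ y x = kern ρ x y := by
  unfold kern
  exact prod_congr rfl fun i _ => by ring

theorem kern_sum (ρ : ℝ) (y : Fin n → Bool) : ∑ x, kern ρ y x = 1 := by
  unfold kern
  rw [← Fintype.prod_sum (fun i b => (1 + ρ * (chi (y i) * chi b)) / 2)]
  refine prod_eq_one fun i _ => ?_
  simp [chi]; ring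

theorem kern_perm (ρ : ℝ) (σ : Equiv.Perm (Fin n)) (y x : Fin n → Bool) :
    kern ρ (y ∘ σ) (x ∘ σ) = kern ρ y x := by
  unfold kern
  exact Equiv.prod_comp σ (fun i => (1 + ρ * (chi (y i) * chi (x i))) / 2)

theorem kern_eq (α : ℝ) (y x : Fin n → Bool) :
    ∏ i, (if y i = x i then 1 - α else α) = kern (1 - 2 * α) y x := by
  unfold kern
  refine prod_congr rfl fun i _ => ?_
  cases y i <;> cases x i <;> simp [chi] <;> ring

/-- The noise operator. -/
noncomputable def noise (ρ : ℝ) (F : (Fin n → Bool) → ℝ) (y : Fin n → Bool) : ℝ :=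
  ∑ x, F x * kern ρ y x

theorem noise_nonneg {ρ : ℝ} (h0 : 0 ≤ ρ) (h1 : ρ ≤ 1) {F : (Fin n → Bool) → ℝ}
    (hF : ∀ x, 0 ≤ F x) (y : Fin n → Bool) : 0 ≤ noise ρ F y :=
  sum_nonneg fun x _ => mul_nonneg (hF x) (kern_nonneg h0 h1 y x)

theorem noise_le {ρ : ℝ} (h0 : 0 ≤ ρ) (h1 : ρ ≤ 1) {F : (Fin n → Bool) → ℝ}
    (hF : ∀ x, F x ≤ 1) (y : Fin n → Bool) : noise ρ F y ≤ 1 := by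
  rw [← kern_sum ρ y]
  refine sum_le_sum fun x _ => ?_
  nlinarith [hF x, kern_nonneg h0 h1 y x]

theorem noise_symm {ρ : ℝ} {F : (Fin n → Bool) → ℝ}
    (hs : ∀ (σ : Equiv.Perm (Fin n)) x, F (x ∘ σ) = F x) (σ : Equiv.Perm (Fin n))
    (y : Fin n → Bool) : noise ρ F (y ∘ σ) = noise ρ F y := by
  unfold noise
  rw [← sum_perm σ]
  simp only [hs, kern_perm]

theorem avg_noise (ρ : ℝ) (F : (Fin n → Bool) → ℝ) : avg (noise ρ F) = avg F := by
  unfold avg noise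
  rw [sum_comm]
  congr 1
  refine sum_congr rfl fun x _ => ?_
  rw [← mul_sum]
  simp only [kern_comm ρ _ x, kern_sum, mul_one]

theorem noise_mono {ρ : ℝ} (h0 : 0 ≤ ρ) (h1 : ρ ≤ 1) {F : (Fin n → Bool) → ℝ}
    (hm : ∀ k x, 0 ≤ chi (x k) * (F x - F (flipAt k x))) (k : Fin n) (y : Fin n → Bool) :
    0 ≤ chi (y k) * (noise ρ F y - noise ρ F (flipAt k y)) := by
  classical
  let K : (Fin n → Bool) → ℝ := fun x => ∏ i ∈ univ.erase k, (1 + ρ * (chi (y i) * chi (x i))) / 2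
  have hK : ∀ x, 0 ≤ K x := by
    intro x
    refine prod_nonneg fun i _ => ?_
    rcases chi_eq (y i) with h | h <;> rcases chi_eq (x i) with h' | h' <;> rw [h, h'] <;> linarith
  have hKf : ∀ x, K (flipAt k x) = K x := by
    intro x
    refine prod_congr rfl fun i hi => ?_
    rw [flipAt_ne (ne_of_mem_erase hi)]
  have e1 : ∀ x, kern ρ y x = (1 + ρ * (chi (y k) * chi (x k))) / 2 * K x :=
    fun x => (mul_prod_erase univ _ (mem_univ k)).symm
  have e2 : ∀ x, kern ρ (flipAt k y) x = (1 - ρ * (chi (y k) * chi (x k))) / 2 * K x := by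
    intro x
    unfold kern
    rw [← mul_prod_erase univ _ (mem_univ k), flipAt_self, chi_not]
    congr 1
    · ring
    · refine prod_congr rfl fun i hi => ?_
      rw [flipAt_ne (ne_of_mem_erase hi)]
  have e3 : chi (y k) * (noise ρ F y - noise ρ F (flipAt k y)) =
      ρ * ∑ x, chi (x k) * F x * K x := by
    unfold noise
    rw [← sum_sub_distrib, mul_sum, mul_sum]
    refine sum_congr rfl fun x _ => ?_
    rw [e1, e2]
    linear_combination (ρ * chi (x k) * F x * K x) * chi_mul_self (y k)
  rw [e3]
  refine mul_nonneg h0 ?_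
  have h2 := sum_flip k (fun x => chi (x k) * F x * K x)
  simp only [hKf, flipAt_self, chi_not] at h2
  have h3 : 0 ≤ ∑ x, (chi (x k) * F x * K x + -chi (x k) * F (flipAt k x) * K x) := by
    refine sum_nonneg fun x _ => ?_
    have := mul_nonneg (hm k x) (hK x)
    linarith
  rw [sum_add_distrib] at h3
  linarith

end

/-! ### Comparing a polynomial with the arcsine -/

section

theorem hasDerivAt_poly {w : ℕ → ℝ} {N : ℕ} (hN : w (N + 1) = 0) (x : ℝ) :
    HasDerivAt (fun t => ∑ k ∈ range (N + 1), w k * t ^ k)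
      (∑ k ∈ range (N + 1), ((k : ℝ) + 1) * w (k + 1) * x ^ k) x := by
  have h := HasDerivAt.fun_sum (u := range (N + 1)) (A := fun k t => w k * t ^ k)
    (A' := fun k => w k * ((k : ℕ) * x ^ (k - 1))) (x := x)
    (fun k _ => (hasDerivAt_pow k x).const_mul (w k))
  refine h.congr_deriv ?_
  rw [sum_range_succ', sum_range_succ]
  simp only [hN, Nat.cast_zero, zero_mul, mul_zero, add_zero, Nat.add_sub_cancel]
  refine sum_congr rfl fun k _ => ?_
  push_cast; ring

theorem shift_poly {u : ℕ → ℝ} {N : ℕ} (h0 : u 0 = 0) (hN : u (N + 1) = 0) (x : ℝ) :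
    x * ∑ k ∈ range (N + 1), u (k + 1) * x ^ k = ∑ k ∈ range (N + 1), u k * x ^ k := by
  rw [sum_range_succ, sum_range_succ' (fun k => u k * x ^ k), hN, h0]
  simp only [zero_mul, add_zero, mul_sum]
  refine sum_congr rfl fun k _ => ?_
  ring

/-- A polynomial whose only negative coefficient is the leading one cannot return to positive
values after having been negative. -/
theorem sign_poly {p : ℕ → ℝ} {N : ℕ} (hp : ∀ k < N, 0 ≤ p k) {a b : ℝ} (ha : 0 < a)
    (hab : a ≤ b) (h : ∑ k ∈ range (N + 1), p k * a ^ k < 0) :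
    ∑ k ∈ range (N + 1), p k * b ^ k ≤ 0 := by
  have hb : 0 < b := ha.trans_le hab
  have key : (∑ k ∈ range (N + 1), p k * b ^ k) * a ^ N ≤
      (∑ k ∈ range (N + 1), p k * a ^ k) * b ^ N := by
    rw [sum_mul, sum_mul]
    refine sum_le_sum fun k hk => ?_
    rcases (Nat.lt_succ_iff.mp (mem_range.mp hk)).eq_or_lt with rfl | hlt
    · exact le_of_eq (by ring)
    · obtain ⟨j, rfl⟩ := Nat.exists_eq_add_of_lt hlt
      have h1 : a ^ (j + 1) ≤ b ^ (j + 1) := pow_le_pow_left₀ ha.le hab _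
      have h2 : 0 ≤ p k * a ^ k * b ^ k := by
        have := hp k hlt
        positivity
      calc p k * b ^ k * a ^ (k + j + 1) = p k * a ^ k * b ^ k * a ^ (j + 1) := by ring
        _ ≤ p k * a ^ k * b ^ k * b ^ (j + 1) := mul_le_mul_of_nonneg_left h1 h2
        _ = _ := by ring
  by_contra hc
  push Not at hc
  have h1 : 0 < (∑ k ∈ range (N + 1), p k * b ^ k) * a ^ N := by positivity
  have h2 : (∑ k ∈ range (N + 1), p k * a ^ k) * b ^ N < 0 :=
    mul_neg_of_neg_of_pos h (by positivity)
  linarith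

/-- If the Taylor coefficients `w k` grow at least as fast as those of the arcsine up to degree
`N` and vanish afterwards, then the difference with `(2/π) arcsin` first increases and then
decreases, hence is nonnegative as soon as it is so at both endpoints. -/
theorem arcsin_le_poly {w : ℕ → ℝ} {N : ℕ} (hz : ∀ k, N < k → w k = 0)
    (hw : ∀ k < N, (k : ℝ) ^ 2 * w k ≤ (k + 2) * (k + 1) * w (k + 2))
    (h0 : 0 ≤ w 0) (h1 : 2 / Real.pi ≤ w 1)
    (hs : ∑ k ∈ range (N + 1), w k = 1) {ρ : ℝ} (hρ0 : 0 ≤ ρ) (hρ1 : ρ ≤ 1) :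
    2 / Real.pi * Real.arcsin ρ ≤ ∑ k ∈ range (N + 1), w k * ρ ^ k := by
  let P : ℝ → ℝ := fun t => ∑ k ∈ range (N + 1), w k * t ^ k
  let P1 : ℝ → ℝ := fun t => ∑ k ∈ range (N + 1), ((k : ℝ) + 1) * w (k + 1) * t ^ k
  let P2 : ℝ → ℝ := fun t => ∑ k ∈ range (N + 1), ((k : ℝ) + 2) * (k + 1) * w (k + 2) * t ^ k
  have hP : ∀ t, HasDerivAt P (P1 t) t := fun t => hasDerivAt_poly (hz _ (by omega)) t
  have hP1 : ∀ t, HasDerivAt P1 (P2 t) t := by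
    intro t
    have h := hasDerivAt_poly (w := fun k => ((k : ℝ) + 1) * w (k + 1)) (N := N)
      (by simp [hz (N + 1 + 1) (by omega)]) t
    refine h.congr_deriv ?_
    refine sum_congr rfl fun k _ => ?_
    push_cast; ring
  let p : ℕ → ℝ := fun k => ((k : ℝ) + 2) * (k + 1) * w (k + 2) - (k : ℝ) ^ 2 * w k
  let Nn : ℝ → ℝ := fun t => ∑ k ∈ range (N + 1), p k * t ^ k
  have hNn : ∀ t, (1 - t ^ 2) * P2 t - t * P1 t = Nn t := by
    intro t
    have e1 : t * P1 t = ∑ k ∈ range (N + 1), ((k : ℝ) * w k) * t ^ k := by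
      rw [← shift_poly (u := fun k => (k : ℝ) * w k) (by simp) (by simp [hz (N + 1) (by omega)])]
      simp [P1]
    have e2 : t * (t * P2 t) = ∑ k ∈ range (N + 1), ((k : ℝ) * (k - 1) * w k) * t ^ k := by
      rw [← shift_poly (u := fun k => (k : ℝ) * (k - 1) * w k) (by simp)
        (by simp [hz (N + 1) (by omega)]),
        ← shift_poly (u := fun k => ((k + 1 : ℕ) : ℝ) * ((k + 1 : ℕ) - 1) * w (k + 1)) (by simp)
        (by simp [hz (N + 1 + 1) (by omega)])]
      congr 2
      refine sum_congr rfl fun k _ => ?_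
      push_cast; ring
    have e3 : (1 - t ^ 2) * P2 t - t * P1 t = P2 t - t * (t * P2 t) - t * P1 t := by ring
    rw [e3, e1, e2, ← sum_sub_distrib, ← sum_sub_distrib]
    refine sum_congr rfl fun k _ => ?_
    simp only [p]; ring
  let R : ℝ → ℝ := fun t => √(1 - t ^ 2) * P1 t
  have hR : ∀ t : ℝ, 0 ≤ t → t < 1 → HasDerivAt R (Nn t / √(1 - t ^ 2)) t := by
    intro t ht0 ht1
    have hpos : 0 < 1 - t ^ 2 := by nlinarith
    have hsq := Real.sqrt_pos.mpr hpos
    have hd : HasDerivAt (fun t : ℝ => 1 - t ^ 2) (-(2 * t)) t := by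
      have := (hasDerivAt_pow 2 t).const_sub 1
      refine this.congr_deriv ?_
      norm_num
    have h := (hd.sqrt hpos.ne').mul (hP1 t)
    refine h.congr_deriv ?_
    rw [← hNn]
    field_simp
    rw [Real.sq_sqrt hpos.le]
    ring
  have hR0 : R 0 = w 1 := by
    simp only [R, P1]
    rw [sum_eq_single 0]
    · simp
    · intro k _ hk; simp [hk]
    · simp
  let G : ℝ → ℝ := fun t => P t - 2 / Real.pi * Real.arcsin t
  have hGc : Continuous G := by
    have : Continuous P := continuous_iff_continuousAt.mpr fun t => (hP t).continuousAt
    exact this.sub (Real.continuous_arcsin.const_mul _)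
  have hG : ∀ t : ℝ, 0 ≤ t → t < 1 →
      HasDerivAt G (P1 t - 2 / Real.pi * (1 / √(1 - t ^ 2))) t := fun t ht0 ht1 =>
    (hP t).sub ((Real.hasDerivAt_arcsin (by linarith) ht1.ne).const_mul _)
  have hG0 : 0 ≤ G 0 := by
    have : P 0 = w 0 := by
      simp only [P]
      rw [sum_eq_single 0]
      · simp
      · intro k _ hk; simp [hk]
      · simp
    simp only [G, this, Real.arcsin_zero]; linarith
  have hG1 : G 1 = 0 := by
    simp only [G, P, one_pow, mul_one, hs, Real.arcsin_one]
    have := Real.pi_ne_zero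
    field_simp; ring
  by_contra hcon
  have hneg : G ρ < 0 := by simp only [G, P]; linarith
  have hρ0' : 0 < ρ := by
    rcases hρ0.eq_or_lt with h | h
    · rw [← h] at hneg; linarith
    · exact h
  have hρ1' : ρ < 1 := by
    rcases hρ1.eq_or_lt with h | h
    · rw [h] at hneg; linarith
    · exact h
  obtain ⟨a, ha, ha'⟩ := exists_hasDerivAt_eq_slope G _ hρ0' hGc.continuousOn
    (fun t ht => hG t ht.1.le (ht.2.trans hρ1'))
  obtain ⟨b, hb, hb'⟩ := exists_hasDerivAt_eq_slope G _ hρ1' hGc.continuousOn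
    (fun t ht => hG t (hρ0'.trans ht.1).le ht.2)
  have ha1 : a < 1 := ha.2.trans hρ1'
  have hab : a < b := ha.2.trans hb.1
  have hRa : R a < 2 / Real.pi := by
    have hsq : 0 < √(1 - a ^ 2) := Real.sqrt_pos.mpr (by nlinarith [ha.1])
    have : P1 a - 2 / Real.pi * (1 / √(1 - a ^ 2)) < 0 := by
      rw [ha']; exact div_neg_of_neg_of_pos (by linarith) (by linarith)
    have := mul_neg_of_pos_of_neg hsq this
    have e : √(1 - a ^ 2) * (P1 a - 2 / Real.pi * (1 / √(1 - a ^ 2))) = R a - 2 / Real.pi := by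
      simp only [R]; field_simp
    linarith
  have hRb : 2 / Real.pi < R b := by
    have hsq : 0 < √(1 - b ^ 2) := Real.sqrt_pos.mpr (by nlinarith [hb.1, hb.2])
    have : 0 < P1 b - 2 / Real.pi * (1 / √(1 - b ^ 2)) := by
      rw [hb']; exact div_pos (by linarith) (by linarith)
    have := mul_pos hsq this
    have e : √(1 - b ^ 2) * (P1 b - 2 / Real.pi * (1 / √(1 - b ^ 2))) = R b - 2 / Real.pi := by
      simp only [R]; field_simp
    linarith
  -- `R` starts above `2/π`, so it decreases somewhere before `a` and increases again after `a`.
  obtain ⟨c, hc, hc'⟩ := exists_hasDerivAt_eq_slope R _ ha.1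
    (fun t ht => (hR t ht.1 (ht.2.trans_lt ha1)).continuousAt.continuousWithinAt)
    (fun t ht => hR t ht.1.le (ht.2.trans ha1))
  obtain ⟨d, hd, hd'⟩ := exists_hasDerivAt_eq_slope R _ hab
    (fun t ht => (hR t (ha.1.le.trans ht.1) (ht.2.trans_lt hb.2)).continuousAt.continuousWithinAt)
    (fun t ht => hR t (ha.1.trans ht.1).le (ht.2.trans hb.2))
  have hNc : Nn c < 0 := by
    have hsq : 0 < √(1 - c ^ 2) := Real.sqrt_pos.mpr (by nlinarith [hc.1, hc.2])
    have : Nn c / √(1 - c ^ 2) < 0 := by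
      rw [hc']; exact div_neg_of_neg_of_pos (by linarith) (by linarith [ha.1])
    by_contra hge
    push Not at hge
    have := div_nonneg hge hsq.le
    linarith
  have hNd : 0 < Nn d := by
    have hsq : 0 < √(1 - d ^ 2) :=
      Real.sqrt_pos.mpr (by nlinarith [hd.1, hd.2, hb.2, ha.1])
    have : 0 < Nn d / √(1 - d ^ 2) := by
      rw [hd']; exact div_pos (by linarith) (by linarith)
    by_contra hge
    push Not at hge
    have := div_nonpos_of_nonpos_of_nonneg hge hsq.le
    linarith
  have := sign_poly (p := p) (N := N) (fun k hk => by simp only [p]; linarith [hw k hk]) hc.1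
    (hc.2.trans hd.1).le hNc
  exact absurd hNd (not_lt.mpr this)

end

/-! ### Fourier analysis of majority -/

section
variable {n : ℕ}

/-- The `±1`-valued majority. -/
def sg (x : Fin n → Bool) : ℝ := if n < 2 * hw x then 1 else -1

/-- The Fourier–Walsh coefficient of `f` at `S`. -/
noncomputable def co (f : (Fin n → Bool) → ℝ) (S : Finset (Fin n)) : ℝ :=
  avg (fun x => f x * ∏ i ∈ S, chi (x i))

theorem sum_chi (x : Fin n → Bool) : ∑ j, chi (x j) = 2 * (hw x : ℝ) - n := by
  have h : ∀ j, chi (x j) = 2 * (if x j = true then (1:ℝ) else 0) - 1 := by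
    intro j; cases x j <;> simp [chi]; norm_num
  simp only [h, sum_sub_distrib, ← mul_sum, sum_boole, hw]
  simp

theorem hw_perm (σ : Equiv.Perm (Fin n)) (x : Fin n → Bool) : hw (x ∘ σ) = hw x := by
  have h1 := sum_chi (x ∘ σ)
  have h2 := sum_chi x
  have h3 : ∑ j, chi ((x ∘ σ) j) = ∑ j, chi (x j) := Equiv.sum_comp σ (fun j => chi (x j))
  have : (hw (x ∘ σ) : ℝ) = hw x := by linarith
  exact_mod_cast this

theorem sum_erase_chi (i : Fin n) (x : Fin n → Bool) :
    ∑ j ∈ univ.erase i, chi (x j) = 2 * (hw x : ℝ) - n - chi (x i) := by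
  rw [← sum_chi, ← add_sum_erase univ _ (mem_univ i)]; ring

theorem hw_flip (i : Fin n) (x : Fin n → Bool) :
    (hw (flipAt i x) : ℝ) = hw x - chi (x i) := by
  have h1 := sum_erase_chi i x
  have h2 := sum_erase_chi i (flipAt i x)
  rw [flipAt_self, chi_not] at h2
  have h3 : ∑ j ∈ univ.erase i, chi (flipAt i x j) = ∑ j ∈ univ.erase i, chi (x j) :=
    sum_congr rfl fun j hj => by rw [flipAt_ne (ne_of_mem_erase hj)]
  linarith

theorem hw_flip_cases (i : Fin n) (x : Fin n → Bool) :
    (chi (x i) = 1 ∧ hw (flipAt i x) + 1 = hw x) ∨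
      (chi (x i) = -1 ∧ hw (flipAt i x) = hw x + 1) := by
  have h := hw_flip i x
  rcases chi_eq (x i) with h' | h' <;> rw [h'] at h
  · left
    refine ⟨h', ?_⟩
    have : (hw (flipAt i x) : ℝ) + 1 = hw x := by linarith
    exact_mod_cast this
  · right
    refine ⟨h', ?_⟩
    have : (hw (flipAt i x) : ℝ) = hw x + 1 := by linarith
    exact_mod_cast this

/-- A bit is pivotal for majority only when the remaining bits are balanced. -/
theorem sg_pivot (hn : Odd n) (i : Fin n) (x : Fin n → Bool) :
    sg (flipAt i x) * ∑ j ∈ univ.erase i, chi (x j) = sg x * ∑ j ∈ univ.erase i, chi (x j) := by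
  obtain ⟨m, hm⟩ := hn
  rw [sum_erase_chi]
  by_cases hb : 2 * (hw x : ℝ) - n - chi (x i) = 0
  · rw [hb]; simp
  · congr 1
    unfold sg
    rcases hw_flip_cases i x with ⟨h, h'⟩ | ⟨h, h'⟩ <;> rw [h] at hb
    · have : 2 * hw x ≠ n + 1 := by
        intro h2
        apply hb
        have : (2 * hw x : ℝ) = n + 1 := by exact_mod_cast h2
        linarith
      congr 1
      apply propext
      omega
    · have : 2 * hw x + 1 ≠ n := by
        intro h2
        apply hb
        have : (2 * hw x + 1 : ℝ) = n := by exact_mod_cast h2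
        linarith
      congr 1
      apply propext
      omega

theorem sg_perm (σ : Equiv.Perm (Fin n)) (x : Fin n → Bool) : sg (x ∘ σ) = sg x := by
  unfold sg; rw [hw_perm]

theorem sg_mono (k : Fin n) (x : Fin n → Bool) :
    0 ≤ chi (x k) * (sg x - sg (flipAt k x)) := by
  unfold sg
  rcases hw_flip_cases k x with ⟨h, h'⟩ | ⟨h, h'⟩ <;> rw [h] <;> split_ifs <;>
    first | (norm_num; done) | (exfalso; omega)

theorem sg_mul_self (x : Fin n → Bool) : sg x * sg x = 1 := by
  unfold sg; split_ifs <;> norm_num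

theorem avg_sg (hn : Odd n) : avg (sg (n := n)) = 0 := by
  obtain ⟨m, hm⟩ := hn
  have inv : Function.Involutive (fun x : Fin n → Bool => fun i => !x i) := by
    intro x; ext i; simp
  have h : ∑ x : Fin n → Bool, sg (fun i => !x i) = ∑ x : Fin n → Bool, sg x :=
    Fintype.sum_equiv (inv.toPerm _) _ _ (fun _ => rfl)
  have h2 : ∀ x : Fin n → Bool, sg (fun i => !x i) = -sg x := by
    intro x
    have e1 := sum_chi x
    have e2 := sum_chi (fun i => !x i)
    simp only [chi_not, sum_neg_distrib] at e2
    have e3 : (hw x : ℝ) + hw (fun i => !x i) = n := by linarith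
    have e4 : hw x + hw (fun i => !x i) = n := by exact_mod_cast e3
    unfold sg
    split_ifs <;> first | (norm_num; done) | (exfalso; omega)
  simp only [h2, sum_neg_distrib] at h
  have : ∑ x : Fin n → Bool, sg x = 0 := by linarith
  simp [avg, this]

/-- Fourier formula for the noise stability. -/
theorem stab_eq (ρ : ℝ) (f : (Fin n → Bool) → ℝ) :
    avg (fun y => f y * noise ρ f y) = ∑ S ∈ univ.powerset, ρ ^ #S * co f S ^ 2 := by
  have hk : ∀ y x : Fin n → Bool, kern ρ y x =
      ((2:ℝ) ^ n)⁻¹ * ∑ S ∈ univ.powerset, ρ ^ #S * ((∏ i ∈ S, chi (y i)) * ∏ i ∈ S, chi (x i)) := by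
    intro y x
    unfold kern
    rw [prod_div_distrib, prod_one_add]
    simp only [prod_const, prod_mul_distrib, card_univ, Fintype.card_fin]
    rw [div_eq_inv_mul]
  simp only [noise, hk, co, avg]
  simp only [mul_sum]
  simp only [sum_comm (s := univ) (t := univ.powerset)]
  refine sum_congr rfl fun S _ => ?_
  rw [sq, sum_mul_sum, mul_sum]
  refine sum_congr rfl fun y _ => ?_
  rw [mul_sum]
  refine sum_congr rfl fun x _ => ?_
  ring

theorem noise_one (f : (Fin n → Bool) → ℝ) (y : Fin n → Bool) : noise 1 f y = f y := by
  unfold noise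
  rw [sum_eq_single y]
  · have : kern 1 y y = 1 := prod_eq_one fun i _ => by rw [chi_mul_self]; norm_num
    rw [this, mul_one]
  · intro x _ hx
    obtain ⟨i, hi⟩ := Function.ne_iff.mp hx
    have : kern 1 y x = 0 := prod_eq_zero (mem_univ i) (by
      revert hi; cases x i <;> cases y i <;> simp [chi])
    rw [this, mul_zero]
  · simp

/-- The Fourier coefficient of majority at sets of size `k ≤ n`. -/
noncomputable def mc (n k : ℕ) : ℝ :=
  co (sg (n := n)) (univ.filter (fun i : Fin n => i.val < k))

theorem card_low {k : ℕ} (hk : k ≤ n) : #(univ.filter (fun i : Fin n => i.val < k)) = k := by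
  rw [Fin.card_filter_val_lt]; exact min_eq_right hk

/-- The coefficients of the symmetric function `sg` depend only on the size of the set. -/
theorem co_sg (S : Finset (Fin n)) : co sg S = mc n #S := by
  classical
  set T := univ.filter (fun i : Fin n => i.val < #S) with hT
  have hc : #S = #T := by
    rw [hT, card_low]; simpa using card_le_univ S
  let e : {i // i ∈ S} ≃ {i // i ∈ T} := Finset.equivOfCardEq hc
  let σ : Equiv.Perm (Fin n) := e.extendSubtype
  have hσ : S.map σ.toEmbedding = T := by
    apply eq_of_subset_of_card_le
    · intro i hi
      obtain ⟨j, hj, rfl⟩ := mem_map.mp hi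
      exact e.extendSubtype_mem j hj
    · rw [card_map, hc]
  unfold mc
  rw [← hT, ← hσ]
  unfold co
  rw [← avg_perm σ (fun x => sg x * ∏ i ∈ S, chi (x i))]
  simp only [sg_perm, prod_map]
  rfl

/-- Two-step recurrence between the Fourier coefficients of majority, obtained by expanding
`𝔼[sg · χ_{A ∪ {i}} · ∑_{j ≠ i} χ_j] = 0`, which holds because the function averaged is odd in
the `i`-th bit by `sg_pivot`. -/
theorem mc_rec (hn : Odd n) {k : ℕ} (hk : k < n) :
    (k:ℝ) * mc n k + ((n:ℝ) - 1 - k) * mc n (k + 2) = 0 := by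
  classical
  set i : Fin n := ⟨k, hk⟩ with hi
  set A := univ.filter (fun j : Fin n => j.val < k) with hA
  have hAc : #A = k := card_low hk.le
  have hiA : i ∉ A := by simp [hA, hi]
  have key : ∑ j ∈ univ.erase i,
      avg (fun x => sg x * (chi (x j) * ∏ l ∈ insert i A, chi (x l))) = 0 := by
    rw [← avg_sum]
    have : (fun x : Fin n → Bool => ∑ j ∈ univ.erase i, sg x * (chi (x j) * ∏ l ∈ insert i A, chi (x l)))
        = fun x => (sg x * ∑ j ∈ univ.erase i, chi (x j)) * (chi (x i) * ∏ l ∈ A, chi (x l)) := by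
      ext x
      rw [← mul_sum, ← sum_mul, prod_insert hiA]; ring
    rw [this]
    apply avg_eq_zero_of_flip i
    intro x
    have h1 : ∑ j ∈ univ.erase i, chi (flipAt i x j) = ∑ j ∈ univ.erase i, chi (x j) :=
      sum_congr rfl fun j hj => by rw [flipAt_ne (ne_of_mem_erase hj)]
    have h2 : ∏ l ∈ A, chi (flipAt i x l) = ∏ l ∈ A, chi (x l) :=
      prod_congr rfl fun j hj => by rw [flipAt_ne (ne_of_mem_of_not_mem hj hiA)]
    rw [h1, h2, sg_pivot hn, flipAt_self, chi_not]
    ring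
  have hterm : ∀ j ∈ univ.erase i,
      avg (fun x => sg x * (chi (x j) * ∏ l ∈ insert i A, chi (x l))) =
        if j ∈ A then mc n k else mc n (k + 2) := by
    intro j hj
    have hji : j ≠ i := ne_of_mem_erase hj
    split_ifs with hjA
    · have h := co_sg (insert i (A.erase j))
      rw [card_insert_of_notMem (fun h => hiA (mem_of_mem_erase h)),
        card_erase_add_one hjA, hAc] at h
      rw [← h]
      unfold co
      congr 1; ext x
      rw [prod_insert hiA, prod_insert (fun h => hiA (mem_of_mem_erase h)),
        ← mul_prod_erase A _ hjA]
      linear_combination (sg x * chi (x i) * ∏ l ∈ A.erase j, chi (x l)) * chi_mul_self (x j)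
    · have hj2 : j ∉ insert i A := by simp [hji, hjA]
      have h := co_sg (insert j (insert i A))
      rw [card_insert_of_notMem hj2, card_insert_of_notMem hiA, hAc] at h
      rw [← h]
      unfold co
      congr 1; ext x
      rw [prod_insert hj2]
  rw [sum_congr rfl hterm, sum_ite, sum_const, sum_const] at key
  have c1 : (univ.erase i).filter (fun j => j ∈ A) = A := by
    ext j
    simp only [mem_filter, mem_erase, mem_univ, and_true]
    exact ⟨fun h => h.2, fun h => ⟨fun h' => hiA (h' ▸ h), h⟩⟩
  have c2 := card_filter_add_card_filter_not (s := univ.erase i) (fun j => j ∈ A)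
  rw [c1, hAc, card_erase_of_mem (mem_univ i), card_univ, Fintype.card_fin] at c2
  rw [c1, hAc, nsmul_eq_mul, nsmul_eq_mul] at key
  have c3 : ((#((univ.erase i).filter (fun j => ¬ j ∈ A)) : ℕ) : ℝ) = (n:ℝ) - 1 - k := by
    have : k + #((univ.erase i).filter (fun j => ¬ j ∈ A)) + 1 = n := by omega
    have h : ((k + #((univ.erase i).filter (fun j => ¬ j ∈ A)) + 1 : ℕ) : ℝ) = n := by rw [this]
    push_cast at h
    linarith
  rw [c3] at key
  exact key

/-- The Fourier weight of majority at level `k`. -/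
noncomputable def wt (n k : ℕ) : ℝ := (n.choose k : ℝ) * mc n k ^ 2

theorem stab_sg (n : ℕ) (ρ : ℝ) :
    avg (fun y : Fin n → Bool => sg y * noise ρ sg y) = ∑ k ∈ range (n + 1), wt n k * ρ ^ k := by
  rw [stab_eq]
  simp only [co_sg]
  rw [sum_powerset_apply_card (fun k => ρ ^ k * mc n k ^ 2)]
  simp only [card_univ, Fintype.card_fin, nsmul_eq_mul, wt]
  exact sum_congr rfl fun k _ => by ring

theorem wt_sum (n : ℕ) : ∑ k ∈ range (n + 1), wt n k = 1 := by
  have h := stab_sg n 1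
  simp only [noise_one, sg_mul_self, avg_const, one_pow, mul_one] at h
  exact h.symm

/-- The growth condition on the weights implied by the recurrence: for `k < n - 1` the two sides
are in the ratio `(n - 1 - k) : (n - k)`, and for `k = n - 1` both vanish. -/
theorem wt_growth (hn : Odd n) {k : ℕ} (hk : k < n) :
    (k:ℝ) ^ 2 * wt n k ≤ (k + 2) * (k + 1) * wt n (k + 2) := by
  have hr := mc_rec hn hk
  have e1 : ((n.choose (k+1) : ℕ) : ℝ) * (k + 1) = n.choose k * ((n:ℝ) - k) := by
    have := Nat.choose_succ_right_eq n k
    have h : ((n.choose (k+1) * (k+1) : ℕ) : ℝ) = ((n.choose k * (n - k) : ℕ) : ℝ) := by rw [this]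
    push_cast [Nat.cast_sub hk.le] at h
    exact h
  have e2 : ((n.choose (k+2) : ℕ) : ℝ) * (k + 2) = n.choose (k+1) * ((n:ℝ) - 1 - k) := by
    have := Nat.choose_succ_right_eq n (k+1)
    have h : ((n.choose (k+1+1) * (k+1+1) : ℕ) : ℝ) = ((n.choose (k+1) * (n - (k+1)) : ℕ) : ℝ) := by
      rw [this]
    push_cast [Nat.cast_sub (show k+1 ≤ n by omega)] at h
    linear_combination h
  set a := mc n k
  set b := mc n (k + 2)
  set C : ℝ := (n.choose k : ℝ) with hC
  have hC0 : 0 ≤ C := by positivity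
  have e3 : (k + 2) * (k + 1) * wt n (k + 2) = C * ((n:ℝ) - k) * ((n:ℝ) - 1 - k) * b ^ 2 := by
    unfold wt
    linear_combination ((k:ℝ)+1) * b ^ 2 * e2 + ((n:ℝ) - 1 - k) * b ^ 2 * e1
  rw [e3]
  unfold wt
  rcases Nat.lt_or_ge k (n - 1) with h | h
  · have hq : 0 < (n:ℝ) - 1 - k := by
      have : ((k + 1 : ℕ) : ℝ) < n := by exact_mod_cast (by omega : k + 1 < n)
      push_cast at this; linarith
    refine le_of_mul_le_mul_left ?_ hq
    have h1 : (((n:ℝ) - 1 - k) * b) ^ 2 = (k * a) ^ 2 := by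
      have : ((n:ℝ) - 1 - k) * b = -(k * a) := by linarith
      rw [this]; ring
    have h2 : 0 ≤ C * (k * a) ^ 2 := by positivity
    calc ((n:ℝ) - 1 - k) * (k ^ 2 * (C * a ^ 2)) ≤ ((n:ℝ) - k) * (C * (k * a) ^ 2) := by nlinarith
      _ = ((n:ℝ) - 1 - k) * (C * ((n:ℝ) - k) * ((n:ℝ) - 1 - k) * b ^ 2) := by
        linear_combination -(C * ((n:ℝ) - k)) * h1
  · have hkn : (n:ℝ) - 1 - k = 0 := by
      have : ((k + 1 : ℕ) : ℝ) = n := by exact_mod_cast (by omega : k + 1 = n)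
      push_cast at this; linarith
    rw [hkn] at hr ⊢
    have : (k:ℝ) * a = 0 := by linarith
    have : (k:ℝ) ^ 2 * (C * a ^ 2) = 0 := by
      have : (k:ℝ) ^ 2 * (C * a ^ 2) = C * (k * a) ^ 2 := by ring
      rw [this, ‹(k:ℝ) * a = 0›]; ring
    rw [this]; simp

/-- A sum over the cube of a function of the Hamming weight. -/
theorem sum_hw (φ : ℕ → ℝ) :
    ∑ x : Fin n → Bool, φ (hw x) = ∑ k ∈ range (n + 1), (n.choose k : ℝ) * φ k := by
  classical
  have h : ∑ x : Fin n → Bool, φ (hw x) = ∑ S ∈ (univ : Finset (Fin n)).powerset, φ #S := by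
    refine sum_nbij' (fun x => univ.filter (fun i => x i = true)) (fun S i => decide (i ∈ S))
      ?_ ?_ ?_ ?_ ?_
    · intro x _; simp
    · intro S _; simp
    · intro x _; ext i; simp
    · intro S _; ext i; simp
    · intro x _; rfl
  rw [h, sum_powerset_apply_card]
  simp

theorem sum_choose_partial (n j : ℕ) (hj : j ≤ n + 1) :
    ∑ k ∈ range j, (n.choose k : ℝ) * ((n:ℝ) - 2 * k) = j * n.choose j := by
  induction j with
  | zero => simp
  | succ j ih =>
    rw [sum_range_succ, ih (by omega)]
    have := Nat.choose_succ_right_eq n j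
    have h : ((n.choose (j+1) * (j+1) : ℕ) : ℝ) = ((n.choose j * (n - j) : ℕ) : ℝ) := by rw [this]
    push_cast [Nat.cast_sub (show j ≤ n by omega)] at h
    push_cast
    linear_combination -h

/-- The degree-one Fourier coefficient of majority. -/
theorem mc_one (m : ℕ) :
    mc (2 * m + 1) 1 = ((2 * m).factorial : ℝ) / ((m.factorial : ℝ) ^ 2 * 4 ^ m) := by
  have h1 : ∀ j : Fin (2 * m + 1), avg (fun x => sg x * chi (x j)) = mc (2 * m + 1) 1 := by
    intro j
    have := co_sg ({j} : Finset (Fin (2 * m + 1)))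
    simpa [co] using this
  have h2 : ((2 * m + 1 : ℕ) : ℝ) * mc (2 * m + 1) 1 =
      avg (fun x : Fin (2 * m + 1) → Bool => sg x * (2 * (hw x : ℝ) - (2 * m + 1 : ℕ))) := by
    simp only [← sum_chi, mul_sum]
    rw [avg_sum]
    simp only [h1]
    simp
  have h3 : ∑ x : Fin (2 * m + 1) → Bool, sg x * (2 * (hw x : ℝ) - (2 * m + 1 : ℕ)) =
      2 * ((m + 1) * ((2 * m + 1).choose (m + 1) : ℝ)) := by
    have := sum_hw (n := 2 * m + 1) (fun k => (if 2 * m + 1 < 2 * k then 1 else -1) *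
      (2 * (k:ℝ) - (2 * m + 1 : ℕ)))
    unfold sg
    rw [this]
    have p1 := sum_choose_partial (2 * m + 1) (m + 1) (by omega)
    have p2 := sum_choose_partial (2 * m + 1) ((m + 1) + (m + 1)) (by omega)
    have p3 : (2 * m + 1).choose ((m + 1) + (m + 1)) = 0 := Nat.choose_eq_zero_of_lt (by omega)
    rw [p3, sum_range_add, p1] at p2
    rw [show 2 * m + 1 + 1 = (m + 1) + (m + 1) by ring, sum_range_add]
    have q1 : ∑ k ∈ range (m + 1), ((2 * m + 1).choose k : ℝ) *
        ((if 2 * m + 1 < 2 * k then 1 else -1) * (2 * (k:ℝ) - (2 * m + 1 : ℕ))) =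
        (m + 1 : ℕ) * ((2 * m + 1).choose (m + 1) : ℝ) := by
      rw [← p1]
      refine sum_congr rfl fun k hk => ?_
      rw [if_neg (by rw [mem_range] at hk; omega)]; ring
    have q2 : ∑ k ∈ range (m + 1), ((2 * m + 1).choose (m + 1 + k) : ℝ) *
        ((if 2 * m + 1 < 2 * (m + 1 + k) then 1 else -1) *
          (2 * ((m + 1 + k : ℕ):ℝ) - (2 * m + 1 : ℕ))) =
        - ∑ k ∈ range (m + 1), ((2 * m + 1).choose (m + 1 + k) : ℝ) *
          (((2 * m + 1 : ℕ):ℝ) - 2 * (m + 1 + k : ℕ)) := by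
      rw [← sum_neg_distrib]
      refine sum_congr rfl fun k hk => ?_
      rw [if_pos (by omega)]; ring
    rw [q1, q2]
    push_cast at p2 ⊢
    linear_combination -p2
  have h4 : ((2 * m + 1 : ℕ) : ℝ) * mc (2 * m + 1) 1 =
      (m + 1) * ((2 * m + 1).choose (m + 1) : ℝ) / 4 ^ m := by
    rw [h2, avg, h3, pow_succ, pow_mul]; norm_num; field_simp
  have h5 : ((2 * m + 1).choose (m + 1) : ℝ) * ((m + 1) * (m.factorial : ℝ)) * m.factorial =
      (2 * m + 1) * (2 * m).factorial := by
    have := Nat.choose_mul_factorial_mul_factorial (show m + 1 ≤ 2 * m + 1 by omega)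
    rw [show 2 * m + 1 - (m + 1) = m by omega, Nat.factorial_succ m, Nat.factorial_succ (2 * m)]
      at this
    exact_mod_cast this
  have hm : (m.factorial : ℝ) ≠ 0 := by positivity
  have hp : (2 * (m:ℝ) + 1) ≠ 0 := by positivity
  rw [eq_div_iff (by positivity)]
  rw [eq_div_iff (by positivity)] at h4
  push_cast at h4
  apply mul_left_cancel₀ hp
  linear_combination (m.factorial : ℝ) ^ 2 * h4 + h5

/-- The degree-one weight of majority is the inverse of a Wallis product. -/
theorem wt_one (hn : Odd n) : 2 / Real.pi ≤ wt n 1 := by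
  obtain ⟨m, rfl⟩ := hn
  have h : wt (2 * m + 1) 1 = (Real.Wallis.W m)⁻¹ := by
    have h16 : (2:ℝ) ^ (4 * m) = 4 ^ m * 4 ^ m := by
      rw [← mul_pow, pow_mul]; norm_num
    rw [Real.Wallis.W_eq_factorial_ratio, wt, mc_one, inv_div, Nat.choose_one_right, h16]
    push_cast
    field_simp
  rw [h, ← inv_div]
  exact inv_anti₀ (Real.Wallis.W_pos m) (Real.Wallis.W_le m)

/-- Majority is at least as noise stable, for every odd `n`, as its Gaussian limit. -/
theorem arcsin_le_stab (hn : Odd n) {ρ : ℝ} (h0 : 0 ≤ ρ) (h1 : ρ ≤ 1) :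
    2 / Real.pi * Real.arcsin ρ ≤ avg (fun y : Fin n → Bool => sg y * noise ρ sg y) := by
  rw [stab_sg]
  refine arcsin_le_poly ?_ (fun k hk => wt_growth hn hk) ?_ (wt_one hn) (wt_sum n) h0 h1
  · intro k hk
    simp [wt, Nat.choose_eq_zero_of_lt hk]
  · unfold wt; positivity

end

/-! ### The regularised entropy and the limit -/

section
variable {n : ℕ}

theorem entS_symm (η p : ℝ) : entS η (1 - p) = entS η p := by
  unfold entS
  rw [sub_sub_cancel, add_comm]

theorem entS_concave {η : ℝ} (hη : 0 < η) : ConcaveOn ℝ (Set.Icc 0 1) (entS η) := by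
  refine ⟨convex_Icc 0 1, fun x hx y hy a b ha hb hab => ?_⟩
  obtain ⟨hx0, hx1⟩ := hx
  obtain ⟨hy0, hy1⟩ := hy
  have h := Real.concaveOn_negMulLog.2
  have i1 := h (x := x + η) (y := y + η) (Set.mem_Ici.2 (by linarith)) (Set.mem_Ici.2 (by linarith))
    ha hb hab
  have i2 := h (x := 1 - x + η) (y := 1 - y + η) (Set.mem_Ici.2 (by linarith))
    (Set.mem_Ici.2 (by linarith)) ha hb hab
  simp only [smul_eq_mul, entS] at *
  have e1 : a * (x + η) + b * (y + η) = a * x + b * y + η := by linear_combination η * hab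
  have e2 : a * (1 - x + η) + b * (1 - y + η) = 1 - (a * x + b * y) + η := by
    linear_combination (1 + η) * hab
  rw [e1] at i1
  rw [e2] at i2
  linarith

theorem entS_mono {η d e : ℝ} (hη : 0 < η) (h0 : 0 ≤ d) (hde : d ≤ e) (he : e ≤ 1 / 2) :
    entS η d ≤ entS η e := by
  have h := (entS_concave hη).min_le_of_mem_Icc (x := d) (y := 1 - d) (z := e)
    ⟨h0, by linarith⟩ ⟨by linarith, by linarith⟩ ⟨hde, by linarith⟩
  rwa [entS_symm, min_self] at h

/-- Jensen's inequality for the regularised entropy. -/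
theorem avg_entS_le {η : ℝ} (hη : 0 < η) {G : (Fin n → Bool) → ℝ} (h0 : ∀ x, 0 ≤ G x)
    (h1 : ∀ x, G x ≤ 1) : avg (fun x => entS η (G x)) ≤ entS η (avg G) := by
  have h := (entS_concave hη).le_map_sum (t := univ) (w := fun _ : Fin n → Bool => ((2:ℝ) ^ n)⁻¹)
    (p := G) (fun _ _ => by positivity) (by simp) (fun x _ => ⟨h0 x, h1 x⟩)
  simpa only [avg, mul_sum, smul_eq_mul] using h

/-- The indicator of the event that majority equals `1`. -/
noncomputable def ind (x : Fin n → Bool) : ℝ := (1 + sg x) / 2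

theorem ind_eq (x : Fin n → Bool) : ind x = if majF n x = true then 1 else 0 := by
  unfold ind sg majF
  by_cases h : n < 2 * hw x <;> simp [h]

theorem noise_ind (ρ : ℝ) (y : Fin n → Bool) : noise ρ ind y = (1 + noise ρ sg y) / 2 := by
  unfold noise ind
  have h : (1:ℝ) + ∑ x, sg x * kern ρ y x = ∑ x, (kern ρ y x + sg x * kern ρ y x) := by
    rw [sum_add_distrib, kern_sum]
  rw [h, sum_div]
  exact sum_congr rfl fun x _ => by ring

theorem noisyPMF_true (α : ℝ) :
    noisyPMF n α (majF n) true = fun y => ((2:ℝ) ^ n)⁻¹ * noise (1 - 2 * α) ind y := by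
  ext y
  unfold noisyPMF noise
  rw [mul_sum]
  refine sum_congr rfl fun x _ => ?_
  rw [kern_eq, ind_eq]
  split_ifs <;> ring

theorem noisyPMF_false (α : ℝ) :
    noisyPMF n α (majF n) false = fun y => ((2:ℝ) ^ n)⁻¹ * (1 - noise (1 - 2 * α) ind y) := by
  ext y
  unfold noisyPMF noise
  have h : (1:ℝ) - ∑ x, ind x * kern (1 - 2 * α) y x =
      ∑ x, (kern (1 - 2 * α) y x - ind x * kern (1 - 2 * α) y x) := by
    rw [sum_sub_distrib, kern_sum]
  rw [h, mul_sum]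
  refine sum_congr rfl fun x _ => ?_
  rw [kern_eq, ind_eq]
  cases majF n x <;> simp

/-- The posterior entropy of majority is at most the entropy of the error probability of the
guess `maj y`, which in turn is at most `arccos ρ / π`. -/
theorem avg_entS_noise_le (hn : Odd n) {ρ η : ℝ} (h0 : 0 ≤ ρ) (h1 : ρ ≤ 1) (hη : 0 < η) :
    avg (fun y : Fin n → Bool => entS η (noise ρ ind y)) ≤
      entS η (Real.arccos ρ / Real.pi) := by
  have hF0 : ∀ x : Fin n → Bool, 0 ≤ ind x := fun x => by rw [ind_eq]; split_ifs <;> norm_num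
  have hF1 : ∀ x : Fin n → Bool, ind x ≤ 1 := fun x => by rw [ind_eq]; split_ifs <;> norm_num
  have g0 : ∀ y : Fin n → Bool, 0 ≤ noise ρ ind y := noise_nonneg h0 h1 hF0
  have g1 : ∀ y : Fin n → Bool, noise ρ ind y ≤ 1 := noise_le h0 h1 hF1
  -- `G y` is the posterior probability that `maj x` differs from `maj y`
  set G : (Fin n → Bool) → ℝ := fun y => (1 - sg y * noise ρ sg y) / 2 with hG
  have hGc : ∀ y, G y = 1 - noise ρ ind y ∨ G y = noise ρ ind y := by
    intro y
    simp only [hG, noise_ind]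
    unfold sg
    split_ifs
    · left; ring
    · right; ring
  have e1 : ∀ y, entS η (noise ρ ind y) = entS η (G y) := by
    intro y
    rcases hGc y with h | h <;> rw [h]
    rw [entS_symm]
  have G0 : ∀ y, 0 ≤ G y := by
    intro y
    rcases hGc y with h | h <;> rw [h] <;> linarith [g0 y, g1 y]
  have G1 : ∀ y, G y ≤ 1 := by
    intro y
    rcases hGc y with h | h <;> rw [h] <;> linarith [g0 y, g1 y]
  simp only [e1]
  refine (avg_entS_le hη G0 G1).trans (entS_mono hη (avg_nonneg G0) ?_ ?_)
  · have e2 : avg G = (1 - avg (fun y : Fin n → Bool => sg y * noise ρ sg y)) / 2 := by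
      have : G = fun y => (1 / 2) * (1 - sg y * noise ρ sg y) := by ext y; simp only [hG]; ring
      rw [this, avg_smul, avg_sub, avg_const]; ring
    have e3 : Real.arccos ρ / Real.pi = (1 - 2 / Real.pi * Real.arcsin ρ) / 2 := by
      rw [Real.arccos_eq_pi_div_two_sub_arcsin]
      field_simp
    rw [e2, e3]
    linarith [arcsin_le_stab hn h0 h1]
  · rw [div_le_iff₀ Real.pi_pos]
    linarith [Real.arccos_le_pi_div_two.mpr h0]

/-- The non-asymptotic bound on the SMSE of majority, with regularisation parameter `η`. -/
theorem noisySMSE_le (hn : Odd n) {α η : ℝ} (hα0 : 0 ≤ α) (hα1 : α ≤ 1 / 2) (hη : 0 < η) :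
    noisySMSE n α (majF n) ≤ n / 4 -
      (entS η (1 / 2) - entS η (Real.arccos (1 - 2 * α) / Real.pi)) / 2 +
      1 / (3 * η ^ 3) * ((1 + Real.log n) / √n) := by
  have h0 : 0 ≤ 1 - 2 * α := by linarith
  have h1 : 1 - 2 * α ≤ 1 := by linarith
  have hF0 : ∀ x : Fin n → Bool, 0 ≤ ind x := fun x => by rw [ind_eq]; split_ifs <;> norm_num
  have hF1 : ∀ x : Fin n → Bool, ind x ≤ 1 := fun x => by rw [ind_eq]; split_ifs <;> norm_num
  have hFs : ∀ (σ : Equiv.Perm (Fin n)) x, ind (x ∘ σ) = ind x := fun σ x => by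
    unfold ind; rw [sg_perm]
  have hFm : ∀ k (x : Fin n → Bool), 0 ≤ chi (x k) * (ind x - ind (flipAt k x)) := fun k x => by
    unfold ind; linarith [sg_mono k x]
  have g0 := noise_nonneg h0 h1 hF0
  have g1 := noise_le h0 h1 hF1
  have a := smse_le _ g0 g1 hη
  have b := sum_incr_le g0 g1 (noise_symm hFs) (noise_mono h0 h1 hFm)
  have c := avg_entS_noise_le hn h0 h1 hη
  have d : avg (noise (1 - 2 * α) (ind (n := n))) = 1 / 2 := by
    rw [avg_noise]
    have : (ind (n := n)) = fun x => (1 / 2) * (1 + sg x) := by ext x; unfold ind; ring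
    rw [this, avg_smul, avg_add, avg_const, avg_sg hn]; norm_num
  rw [d] at a
  unfold noisySMSE
  rw [Fintype.sum_bool, noisyPMF_true, noisyPMF_false]
  have e := mul_le_mul_of_nonneg_left b (show 0 ≤ 1 / (3 * η ^ 3) by positivity)
  linarith

theorem binEnt_mul_log (p : ℝ) : binEnt p * Real.log 2 = Real.binEntropy p := by
  have h : Real.log 2 ≠ 0 := (Real.log_pos (by norm_num)).ne'
  unfold binEnt Real.logb Real.binEntropy
  rw [Real.log_inv, Real.log_inv]
  field_simp
  ring

theorem tendsto_entS (p : ℝ) :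
    Filter.Tendsto (fun η => entS η p) (nhdsWithin 0 (Set.Ioi 0)) (nhds (Real.binEntropy p)) := by
  have hc : Continuous (fun η => entS η p) := by
    unfold entS
    exact (Real.continuous_negMulLog.comp (by fun_prop)).add
      (Real.continuous_negMulLog.comp (by fun_prop))
  have h := (hc.tendsto 0).mono_left (nhdsWithin_le_nhds (s := Set.Ioi 0))
  rwa [show entS 0 p = Real.binEntropy p by
    rw [Real.binEntropy_eq_negMulLog_add_negMulLog_one_sub, entS, add_zero, add_zero]] at h

theorem tendsto_log_div_sqrt :
    Filter.Tendsto (fun n : ℕ => (1 + Real.log n) / √(n : ℝ)) Filter.atTop (nhds 0) := by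
  have h1 : Filter.Tendsto (fun x : ℝ => Real.log x / √x) Filter.atTop (nhds 0) := by
    have := (isLittleO_log_rpow_atTop (show (0:ℝ) < 1 / 2 by norm_num)).tendsto_div_nhds_zero
    simpa only [Real.sqrt_eq_rpow] using this
  have h2 : Filter.Tendsto (fun x : ℝ => 1 / √x) Filter.atTop (nhds 0) := by
    simp only [one_div]
    exact Real.tendsto_sqrt_atTop.inv_tendsto_atTop
  have h3 := (h2.add h1).comp tendsto_natCast_atTop_atTop
  simp only [add_zero] at h3
  refine h3.congr fun n => ?_
  simp only [Function.comp]
  ring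

end

theorem stmt4 (α : ℝ) (hα0 : 0 ≤ α) (hα1 : α ≤ 1/2) :
    ∀ ε : ℝ, 0 < ε → ∃ N : ℕ, ∀ n : ℕ, N ≤ n → Odd n →
      noisySMSE n α (majF n) ≤
        ((n : ℝ) - 2 * Real.log 2 * (1 - 2*α)^2 * (1 - muF α)) / 4 + ε := by
  intro ε hε
  set e := Real.arccos (1 - 2 * α) / Real.pi with he
  have hlim := ((tendsto_entS (1 / 2)).sub (tendsto_entS e)).div_const 2
  have hlt : (Real.binEntropy (1 / 2) - Real.binEntropy e) / 2 - ε / 2 <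
      (Real.binEntropy (1 / 2) - Real.binEntropy e) / 2 := by linarith
  obtain ⟨η, hη1, hη⟩ := ((hlim.eventually (lt_mem_nhds hlt)).and self_mem_nhdsWithin).exists
  have hη : 0 < η := hη
  have hlim2 := tendsto_log_div_sqrt.const_mul (1 / (3 * η ^ 3))
  rw [mul_zero] at hlim2
  obtain ⟨N, hN⟩ := Filter.eventually_atTop.mp
    (hlim2.eventually (gt_mem_nhds (show 0 < ε / 2 by linarith)))
  refine ⟨N, fun n hn hodd => ?_⟩
  have hb := noisySMSE_le hodd hα0 hα1 hη
  have hs := hN n hn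
  rw [← he] at hb
  have hhalf : Real.binEntropy (1 / 2) = Real.log 2 := by
    rw [one_div]; exact Real.binEntropy_two_inv
  have hmu : muF α * Real.log 2 = Real.binEntropy e := binEnt_mul_log e
  have hle : Real.binEntropy e ≤ Real.log 2 := Real.binEntropy_le_log_two
  have hsq : (1 - 2 * α) ^ 2 ≤ 1 := by nlinarith
  have hq : Real.log 2 * (1 - muF α) = Real.log 2 - Real.binEntropy e := by rw [← hmu]; ring
  -- the factor `(1 - 2α)²` only weakens the bound
  have hfin : (1 - 2 * α) ^ 2 * (Real.log 2 * (1 - muF α)) ≤ Real.log 2 - Real.binEntropy e := by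
    rw [hq]
    have : 0 ≤ Real.log 2 - Real.binEntropy e := by linarith
    nlinarith
  rw [hhalf] at hη1
  linarith
end
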